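/- The set MPF(x) is computable: for every n ≥ 2 there exists a computable function F taking a signed word w and returning a finite list of signed words, such that for every w the set {π(u) : u ∈ F(w)} equals MPF(π(w)). -/

import Mathlib

/-!
`MPF x` is computed by exhaustive search among positive words of bounded length. The search needs
an algorithm for twisted conjugacy of positive braids and an a priori length bound.

**Garside theory.** In the monoid presented by the braid relations, `σ_i x = σ_j y` forces the
common value to be a right multiple of the least common multiple of `σ_i` and `σ_j`
(`lcmAt_of_eq`). Hence the monoid is cancellative. As `Δ²` is central and divisible by every
generator, inverting its powers inverts every generator, so the monoid embeds in the braid group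
(`wd_eq_iff`): two positive words represent the same braid exactly when they are related by
positive braid relations, which preserve length. Left divisibility makes the braid group a
lattice, with left multiplication acting by automorphisms.

**Twisted conjugacy.** Let `x` and `y = rev(c') x c'` be positive. For `f(u) = x⁻¹ rev(u)⁻¹`, the
braid `rev(u) x u` is positive if and only if `f(u) ≤ u`, and it divides `Δ^{2m}` if and only if
`u ≤ Δ^{2m} f(u)`. The map `f` exchanges joins and meets and inverts translation by the central
element `q = Δ²`. For such maps any two solutions of `f(u) ≤ u ≤ q^m f(u)` are joined by a path
with steps bounded by `q^{±1}`, along which `f(u) ≤ q u` and `u ≤ q^m f(u)` (`exists_path`).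
The path is obtained from a pair of sequences
`q^{-t} c ⊔ q^{t-k} c' ≤ q^t c ⊓ q^{k-t} c'` by repeatedly replacing a pair `A ≤ Z ≤ q^{2w} A` by
`A ⊔ q^{-w} Z ≤ Z ⊓ q^w A`, which halves the width and preserves the crosswise inequalities
`f A ≤ Z`, `f Z ≤ A`. Therefore twisted conjugate positive words are connected by braid relations
and by moves `u ↔ σ_i u σ_i` through words of explicitly bounded length (`TC.conn`), and this is
a reachability question in a finite graph.

**Length bounds.** Multiplying each letter of a signed word by `Δ⁴` gives a positive twisted
conjugate `p`. Stripping equal letters from both ends of `p` gives a palindromic-free one, of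
canonical length at most `2|p|`. A palindromic-free braid is not divisible by `Δ⁴`, so one of
canonical length at most `m` has length at most `(m + 3)|Δ|` (`ln_le_of_lenLE`). All braids
relevant for `MPF` thus have length at most `(2|p| + 3)|Δ|`.
-/

def braidRels (m : ℕ) : Set (FreeGroup (Fin m)) :=
  { r | (∃ i j : Fin m, (i : ℕ) + 1 < (j : ℕ) ∧
          r = FreeGroup.of i * FreeGroup.of j * (FreeGroup.of i)⁻¹ * (FreeGroup.of j)⁻¹) ∨
        (∃ i j : Fin m, (i : ℕ) + 1 = (j : ℕ) ∧
          r = FreeGroup.of i * FreeGroup.of j * FreeGroup.of i *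
              (FreeGroup.of j)⁻¹ * (FreeGroup.of i)⁻¹ * (FreeGroup.of j)⁻¹) }

/-- The braid group on `n` strands. -/
abbrev B (n : ℕ) := PresentedGroup (braidRels (n - 1))

/-- The Artin generators. -/
def σ {n : ℕ} (i : Fin (n - 1)) : B n := PresentedGroup.of i

/-- Evaluation of a signed word in the generators. -/
def π {n : ℕ} (w : List (Fin (n - 1) × Bool)) : B n :=
  (w.map (fun p => if p.2 then σ p.1 else (σ p.1)⁻¹)).prod

/-- The submonoid of positive braids. -/
def P (n : ℕ) : Submonoid (B n) := Submonoid.closure (Set.range (σ (n := n)))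

def σ' {n : ℕ} (j : ℕ) : B n := if h : j < n - 1 then σ ⟨j, h⟩ else 1

/-- The Garside half-twist element Δ. -/
def Δ (n : ℕ) : B n :=
  ((List.range (n - 1)).map
    (fun k => (((List.range (k + 1)).reverse).map (σ' (n := n))).prod)).prod

/-- Simple elements: positive prefixes of Δ. -/
def Simple {n : ℕ} (s : B n) : Prop := s ∈ P n ∧ s⁻¹ * Δ n ∈ P n

/-- Palindromic-free positive braids. -/
def PalFree {n : ℕ} (x : B n) : Prop :=
  ∀ i : Fin (n - 1), (σ i)⁻¹ * x * (σ i)⁻¹ ∉ P n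

/-- Canonical length at most `m`. -/
def lenLE {n : ℕ} (x : B n) (m : ℕ) : Prop :=
  ∃ p : ℤ, (Δ n) ^ (-p) * x ∈ P n ∧ x⁻¹ * (Δ n) ^ (p + (m : ℤ)) ∈ P n

/-- Canonical length exactly `m`. -/
def lenEQ {n : ℕ} (x : B n) (m : ℕ) : Prop :=
  lenLE x m ∧ (1 ≤ m → ¬ lenLE x (m - 1))

/-- Left normal form (as a list of simple factors). -/
def IsLeftNF {n : ℕ} (x : B n) (L : List (B n)) : Prop :=
  (∀ s ∈ L, Simple s ∧ s ≠ 1) ∧ L.prod = x ∧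
  ∀ i : ℕ, i + 1 < L.length → ∀ u : B n, Simple u →
    u⁻¹ * (L.getD i 1 * L.getD (i + 1) 1) ∈ P n → u⁻¹ * L.getD i 1 ∈ P n

/-- Right normal form (as a list of simple factors). -/
def IsRightNF {n : ℕ} (x : B n) (L : List (B n)) : Prop :=
  (∀ s ∈ L, Simple s ∧ s ≠ 1) ∧ L.prod = x ∧
  ∀ i : ℕ, i + 1 < L.length → ∀ u : B n, Simple u →
    (L.getD i 1 * L.getD (i + 1) 1) * u⁻¹ ∈ P n → L.getD (i + 1) 1 * u⁻¹ ∈ P n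

/-- The set of positive, palindromic-free, ε-twisted conjugates of `x`
of minimal canonical length. -/
def MPF {n : ℕ} (rev : B n → B n) (x : B n) : Set (B n) :=
  { y | y ∈ P n ∧ PalFree y ∧ (∃ c : B n, y = rev c * x * c) ∧
    ∀ m : ℕ, (∃ z : B n, z ∈ P n ∧ PalFree z ∧ (∃ c : B n, z = rev c * x * c) ∧
      lenLE z m) → lenLE y m }

namespace BraidMPF

/-! ### The braid monoid and its key divisibility property -/

/-- The generators `σ_i`, `σ_j` commute. -/
def Far {m : ℕ} (i j : Fin m) : Prop := (i : ℕ) + 1 < j ∨ (j : ℕ) + 1 < i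

/-- The generators `σ_i`, `σ_j` satisfy the braid relation. -/
def Adj {m : ℕ} (i j : Fin m) : Prop := (i : ℕ) + 1 = j ∨ (j : ℕ) + 1 = i

theorem Far.symm {m : ℕ} {i j : Fin m} (h : Far i j) : Far j i := Or.symm h
theorem Adj.symm {m : ℕ} {i j : Fin m} (h : Adj i j) : Adj j i := Or.symm h

theorem eq_or_far_or_adj {m : ℕ} (i j : Fin m) : i = j ∨ Far i j ∨ Adj i j := by
  unfold Far Adj; rw [Fin.ext_iff]; omega

/-- The defining relations of the braid monoid, as rewriting rules in both directions. -/
inductive Rule {m : ℕ} : List (Fin m) → List (Fin m) → Prop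
  | comm (i j : Fin m) (h : Far i j) : Rule [i, j] [j, i]
  | braid (i j : Fin m) (h : Adj i j) : Rule [i, j, i] [j, i, j]

theorem Rule.symm {m : ℕ} {l r : List (Fin m)} (h : Rule l r) : Rule r l := by
  cases h with
  | comm i j h => exact .comm j i h.symm
  | braid i j h => exact .braid j i h.symm

theorem Rule.reverse {m : ℕ} {l r : List (Fin m)} (h : Rule l r) : Rule l.reverse r.reverse := by
  cases h with
  | comm i j h => exact .comm j i h.symm
  | braid i j h => exact .braid i j h

theorem Rule.length {m : ℕ} {l r : List (Fin m)} (h : Rule l r) : l.length = r.length := by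
  cases h <;> rfl

/-- One application of a braid relation inside a positive word. -/
def Step {m : ℕ} (u v : List (Fin m)) : Prop :=
  ∃ a b l r, Rule l r ∧ u = a ++ l ++ b ∧ v = a ++ r ++ b

theorem Step.symm {m : ℕ} {u v : List (Fin m)} (h : Step u v) : Step v u := by
  obtain ⟨a, b, l, r, h, rfl, rfl⟩ := h
  exact ⟨a, b, r, l, h.symm, rfl, rfl⟩

theorem Step.length {m : ℕ} {u v : List (Fin m)} (h : Step u v) : u.length = v.length := by
  obtain ⟨a, b, l, r, h, rfl, rfl⟩ := h
  simp [h.length]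

theorem Step.reverse {m : ℕ} {u v : List (Fin m)} (h : Step u v) :
    Step u.reverse v.reverse := by
  obtain ⟨a, b, l, r, h, rfl, rfl⟩ := h
  exact ⟨b.reverse, a.reverse, _, _, h.reverse, by simp, by simp⟩

theorem Step.append {m : ℕ} {u v : List (Fin m)} (h : Step u v) (p q : List (Fin m)) :
    Step (p ++ u ++ q) (p ++ v ++ q) := by
  obtain ⟨a, b, l, r, h, rfl, rfl⟩ := h
  exact ⟨p ++ a, b ++ q, _, _, h, by simp, by simp⟩

/-- Equivalence of positive words modulo the braid relations. -/
def Eqv {m : ℕ} : List (Fin m) → List (Fin m) → Prop := Relation.ReflTransGen Step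

theorem Eqv.symm {m : ℕ} {u v : List (Fin m)} (h : Eqv u v) : Eqv v u := by
  induction h with
  | refl => exact .refl
  | tail _ h ih => exact .head h.symm ih

theorem Eqv.length {m : ℕ} {u v : List (Fin m)} (h : Eqv u v) : u.length = v.length := by
  induction h with
  | refl => rfl
  | tail _ h ih => exact ih.trans h.length

theorem Eqv.append {m : ℕ} {u v : List (Fin m)} (h : Eqv u v) (p q : List (Fin m)) :
    Eqv (p ++ u ++ q) (p ++ v ++ q) := by
  induction h with
  | refl => exact .refl
  | tail _ h ih => exact .tail ih (h.append p q)

theorem Eqv.reverse {m : ℕ} {u v : List (Fin m)} (h : Eqv u v) : Eqv u.reverse v.reverse := by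
  induction h with
  | refl => exact .refl
  | tail _ h ih => exact .tail ih h.reverse

/-- The congruence of the braid monoid. -/
def braidCon (m : ℕ) : Con (FreeMonoid (Fin m)) where
  r u v := Eqv u.toList v.toList
  iseqv := ⟨fun _ => .refl, Eqv.symm, fun h h' => h.trans h'⟩
  mul' {u v u' v'} h h' := by
    have h1 := h.append [] u'.toList
    have h2 := h'.append v.toList []
    simp only [List.nil_append, List.append_nil] at h1 h2
    exact h1.trans h2

/-- The positive braid monoid, presented by the braid relations. -/
abbrev BM (m : ℕ) := (braidCon m).Quotient

/-- The class of a positive word in the braid monoid. -/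
def cls {m : ℕ} (u : List (Fin m)) : BM m := (braidCon m).mk' (FreeMonoid.ofList u)

theorem cls_eq {m : ℕ} {u v : List (Fin m)} : cls u = cls v ↔ Eqv u v :=
  (braidCon m).eq

theorem cls_append {m : ℕ} (u v : List (Fin m)) : cls (u ++ v) = cls u * cls v := rfl

theorem cls_nil {m : ℕ} : cls ([] : List (Fin m)) = 1 := rfl

/-- The generators of the braid monoid. -/
def gen {m : ℕ} (i : Fin m) : BM m := cls [i]

theorem cls_cons {m : ℕ} (i : Fin m) (u : List (Fin m)) : cls (i :: u) = gen i * cls u := rfl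

theorem cls_surj {m : ℕ} (x : BM m) : ∃ u, cls u = x := by
  obtain ⟨u, rfl⟩ := (braidCon m).mk'_surjective x
  exact ⟨u.toList, rfl⟩

/-- Word length, as a function on the braid monoid. -/
def blen {m : ℕ} (x : BM m) : ℕ :=
  Con.liftOn x (fun u => u.toList.length) (fun _ _ h => Eqv.length h)

theorem blen_cls {m : ℕ} (u : List (Fin m)) : blen (cls u) = u.length := rfl

theorem blen_mul {m : ℕ} (x y : BM m) : blen (x * y) = blen x + blen y := by
  obtain ⟨u, rfl⟩ := cls_surj x
  obtain ⟨v, rfl⟩ := cls_surj y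
  rw [← cls_append, blen_cls, blen_cls, blen_cls, List.length_append]

theorem blen_gen {m : ℕ} (i : Fin m) : blen (gen i) = 1 := rfl

theorem gen_comm {m : ℕ} {i j : Fin m} (h : Far i j) : gen i * gen j = gen j * gen i :=
  cls_eq.2 (.single ⟨[], [], _, _, .comm i j h, rfl, rfl⟩)

theorem gen_braid {m : ℕ} {i j : Fin m} (h : Adj i j) :
    gen i * (gen j * gen i) = gen j * (gen i * gen j) :=
  cls_eq.2 (.single ⟨[], [], _, _, .braid i j h, rfl, rfl⟩)

theorem gen_comm' {m : ℕ} {i j : Fin m} (h : Far i j) (z : BM m) :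
    gen i * (gen j * z) = gen j * (gen i * z) := by
  rw [← mul_assoc, gen_comm h, mul_assoc]

theorem gen_braid' {m : ℕ} {i j : Fin m} (h : Adj i j) (z : BM m) :
    gen i * (gen j * (gen i * z)) = gen j * (gen i * (gen j * z)) := by
  have := congrArg (· * z) (gen_braid h)
  simpa only [mul_assoc] using this

/-- `LcmAt i j x y` says that `σ_i x = σ_j y` arises by right multiplication from the least common
multiple of `σ_i` and `σ_j`. -/
def LcmAt {m : ℕ} (i j : Fin m) (x y : BM m) : Prop :=
  (i = j ∧ x = y) ∨
  (Far i j ∧ ∃ z, x = gen j * z ∧ y = gen i * z) ∨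
  (Adj i j ∧ ∃ z, x = gen j * (gen i * z) ∧ y = gen i * (gen j * z))

theorem LcmAt.symm {m : ℕ} {i j : Fin m} {x y : BM m} (h : LcmAt i j x y) : LcmAt j i y x := by
  rcases h with ⟨h, h'⟩ | ⟨h, z, h1, h2⟩ | ⟨h, z, h1, h2⟩
  · exact .inl ⟨h.symm, h'.symm⟩
  · exact .inr (.inl ⟨h.symm, z, h2, h1⟩)
  · exact .inr (.inr ⟨h.symm, z, h2, h1⟩)

/-- Transitivity of `LcmAt`: the cube condition for the triple `i, k, j`, given the key property
for shorter elements. -/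
theorem LcmAt.trans {m L : ℕ}
    (IH : ∀ (i j : Fin m) (x y : BM m), blen x < L → gen i * x = gen j * y → LcmAt i j x y)
    {i j k : Fin m} {x w y : BM m} (hw : blen w ≤ L)
    (h1 : LcmAt i k x w) (h2 : LcmAt k j w y) : LcmAt i j x y := by
  have canc : ∀ (i : Fin m) (x y : BM m), blen x < L → gen i * x = gen i * y → x = y := by
    intro i x y hx h
    rcases IH i i x y hx h with ⟨-, h⟩ | ⟨h, -⟩ | ⟨h, -⟩
    · exact h
    · unfold Far at h; omega
    · unfold Adj at h; omega
  have far : ∀ (i j : Fin m) (x y : BM m), Far i j → blen x < L → gen i * x = gen j * y →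
      ∃ z, x = gen j * z ∧ y = gen i * z := by
    intro i j x y hij hx h
    rcases IH i j x y hx h with ⟨rfl, -⟩ | ⟨-, h⟩ | ⟨h, -⟩
    · unfold Far at hij; omega
    · exact h
    · unfold Far at hij; unfold Adj at h; omega
  have adj : ∀ (i j : Fin m) (x y : BM m), Adj i j → blen x < L → gen i * x = gen j * y →
      ∃ z, x = gen j * (gen i * z) ∧ y = gen i * (gen j * z) := by
    intro i j x y hij hx h
    rcases IH i j x y hx h with ⟨rfl, -⟩ | ⟨h, -⟩ | ⟨-, h⟩
    · unfold Adj at hij; omega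
    · unfold Adj at hij; unfold Far at h; omega
    · exact h
  -- the case where `k` is adjacent to `i` and far from `j`; its mirror image follows by symmetry
  have mixed : ∀ (i j : Fin m) (z1 z2 : BM m), Adj i k → Far k j → i ≠ j →
      blen (gen i * (gen k * z1)) ≤ L → gen i * (gen k * z1) = gen j * z2 →
      LcmAt i j (gen k * (gen i * z1)) (gen k * z2) := by
    intro i j z1 z2 hik hkj hij hl e
    simp only [blen_mul, blen_gen] at hl
    rcases eq_or_far_or_adj i j with h | h | h
    · exact absurd h hij
    · obtain ⟨z3, e1, rfl⟩ := far i j _ _ h (by simp only [blen_mul, blen_gen]; omega) e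
      obtain ⟨z4, rfl, rfl⟩ := far k j _ _ hkj (by omega) e1
      refine .inr (.inl ⟨h, gen k * (gen i * z4), ?_, ?_⟩)
      · rw [gen_comm' h, gen_comm' hkj]
      · rw [gen_braid' hik]
    · obtain ⟨z3, e1, rfl⟩ := adj i j _ _ h (by simp only [blen_mul, blen_gen]; omega) e
      obtain ⟨z4, rfl, e2⟩ := far k j _ _ hkj (by omega) e1
      have l1 := congrArg blen e1
      simp only [blen_mul, blen_gen] at l1 hl
      obtain ⟨z5, rfl, rfl⟩ := adj i k _ _ hik (by omega) e2
      refine .inr (.inr ⟨h, gen k * (gen i * (gen j * z5)), ?_, ?_⟩)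
      · rw [gen_braid' h, gen_comm' hkj (gen i * _), ← gen_comm' hkj z5, gen_braid' hik.symm]
      · rw [← gen_comm' hkj (gen i * (gen j * z5)), gen_braid' h.symm, gen_braid' hik,
          gen_comm' hkj (gen i * z5)]
  rcases h1 with ⟨rfl, rfl⟩ | ⟨hik, z1, rfl, rfl⟩ | ⟨hik, z1, rfl, rfl⟩
  · exact h2
  · rcases h2 with ⟨rfl, rfl⟩ | ⟨hkj, z2, e, rfl⟩ | ⟨hkj, z2, e, rfl⟩
    · exact .inr (.inl ⟨hik, z1, rfl, rfl⟩)
    · simp only [blen_mul, blen_gen] at hw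
      rcases IH i j z1 z2 (by omega) e with ⟨rfl, rfl⟩ | ⟨h, z, rfl, rfl⟩ | ⟨h, z, rfl, rfl⟩
      · exact .inl ⟨rfl, rfl⟩
      · exact .inr (.inl ⟨h, gen k * z, gen_comm' hkj z, gen_comm' hik.symm z⟩)
      · refine .inr (.inr ⟨h, gen k * z, ?_, ?_⟩)
        · rw [gen_comm' hkj, gen_comm' hik.symm]
        · rw [gen_comm' hik.symm, gen_comm' hkj]
    · by_cases hij : i = j
      · subst hij; unfold Far at hik; unfold Adj at hkj; omega
      · exact (mixed j i z2 z1 hkj.symm hik.symm (Ne.symm hij) (by rw [← e]; exact hw) e.symm).symm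
  · rcases h2 with ⟨rfl, rfl⟩ | ⟨hkj, z2, e, rfl⟩ | ⟨hkj, z2, e, rfl⟩
    · exact .inr (.inr ⟨hik, z1, rfl, rfl⟩)
    · by_cases hij : i = j
      · subst hij; unfold Adj at hik; unfold Far at hkj; omega
      · exact mixed i j z1 z2 hik hkj hij hw e
    · simp only [blen_mul, blen_gen] at hw
      by_cases hij : i = j
      · subst hij
        have e1 := canc i _ _ (by simp only [blen_mul, blen_gen]; omega) e
        have e2 := canc k _ _ (by omega) e1
        exact .inl ⟨rfl, by rw [e2]⟩
      · have hf : Far i j := by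
          unfold Far; unfold Adj at hik hkj; rw [Fin.ext_iff] at hij; omega
        obtain ⟨z3, e1, e2⟩ := far i j _ _ hf (by simp only [blen_mul, blen_gen]; omega) e
        obtain ⟨z4, rfl, rfl⟩ := adj k j _ _ hkj (by omega) e1
        have l1 := congrArg blen e
        have l2 := congrArg blen e2
        simp only [blen_mul, blen_gen] at l1 l2 hw
        obtain ⟨z5, rfl, e3⟩ := adj k i _ _ hik.symm (by omega) e2
        have e4 := canc k _ _ (by simp only [blen_mul, blen_gen]; omega) e3
        obtain ⟨z6, rfl, rfl⟩ := far j i _ _ hf.symm (by omega) e4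
        refine .inr (.inl ⟨hf, gen k * (gen j * (gen i * (gen k * z6))), ?_, ?_⟩)
        · rw [gen_comm' hf, gen_braid' hik, gen_braid' hkj]
        · rw [gen_comm' hf.symm, gen_braid' hkj.symm, gen_braid' hik.symm, gen_comm' hf]

/-- A word equivalent to `i :: X` by one step has a head related to `i` by `LcmAt`. -/
theorem Step.lcmAt {m : ℕ} {i : Fin m} {X v : List (Fin m)} (h : Step (i :: X) v) :
    ∃ j Y, v = j :: Y ∧ LcmAt i j (cls X) (cls Y) := by
  obtain ⟨a, b, l, r, h, e, rfl⟩ := h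
  cases a with
  | nil =>
    cases h with
    | comm i' j h =>
      simp only [List.nil_append, List.cons_append, List.cons.injEq] at e
      obtain ⟨rfl, rfl⟩ := e
      exact ⟨j, _, rfl, .inr (.inl ⟨h, cls b, rfl, rfl⟩)⟩
    | braid i' j h =>
      simp only [List.nil_append, List.cons_append, List.cons.injEq] at e
      obtain ⟨rfl, rfl⟩ := e
      exact ⟨j, _, rfl, .inr (.inr ⟨h, cls b, rfl, rfl⟩)⟩
  | cons k a =>
    simp only [List.cons_append, List.cons.injEq] at e
    obtain ⟨rfl, rfl⟩ := e
    exact ⟨i, _, rfl, .inl ⟨rfl, cls_eq.2 (.single ⟨a, b, l, r, h, rfl, rfl⟩)⟩⟩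

theorem lcmAt_aux {m : ℕ} (L : ℕ) : ∀ (i j : Fin m) (x y : BM m), blen x < L →
    gen i * x = gen j * y → LcmAt i j x y := by
  induction L with
  | zero => intro i j x y h; omega
  | succ L IH =>
    intro i j x y hx h
    obtain ⟨X, rfl⟩ := cls_surj x
    obtain ⟨Y, rfl⟩ := cls_surj y
    rw [← cls_cons, ← cls_cons, cls_eq] at h
    -- along a derivation of `i :: X`, every word has a head related to `i`
    have key : ∀ v, Eqv (i :: X) v → ∃ j Y, v = j :: Y ∧ LcmAt i j (cls X) (cls Y) := by
      intro v hv
      induction hv with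
      | refl => exact ⟨i, X, rfl, .inl ⟨rfl, rfl⟩⟩
      | @tail u v hu hs ih =>
        obtain ⟨k, W, rfl, h1⟩ := ih
        obtain ⟨j, Y, rfl, h2⟩ := hs.lcmAt
        refine ⟨j, Y, rfl, LcmAt.trans IH ?_ h1 h2⟩
        have := Eqv.length hu
        simp only [List.length_cons] at this
        rw [blen_cls] at hx ⊢
        omega
    obtain ⟨j', Y', e, h'⟩ := key _ h
    simp only [List.cons.injEq] at e
    obtain ⟨rfl, rfl⟩ := e
    exact h'

/-- Garside's key property: if `σ_i x = σ_j y`, then this element is a right multiple of the least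
common multiple of `σ_i` and `σ_j`. -/
theorem lcmAt_of_eq {m : ℕ} {i j : Fin m} {x y : BM m} (h : gen i * x = gen j * y) :
    LcmAt i j x y :=
  lcmAt_aux (blen x + 1) i j x y (Nat.lt_succ_self _) h

theorem gen_cancel {m : ℕ} {i : Fin m} {x y : BM m} (h : gen i * x = gen i * y) : x = y := by
  rcases lcmAt_of_eq h with ⟨-, h⟩ | ⟨h, -⟩ | ⟨h, -⟩
  · exact h
  · unfold Far at h; omega
  · unfold Adj at h; omega

theorem bm_left_cancel {m : ℕ} {a x y : BM m} (h : a * x = a * y) : x = y := by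
  obtain ⟨u, rfl⟩ := cls_surj a
  induction u with
  | nil => simpa only [cls_nil, one_mul] using h
  | cons i u ih =>
    rw [cls_cons, mul_assoc, mul_assoc] at h
    exact ih (gen_cancel h)

theorem bm_right_cancel {m : ℕ} {a x y : BM m} (h : x * a = y * a) : x = y := by
  obtain ⟨u, rfl⟩ := cls_surj a
  obtain ⟨X, rfl⟩ := cls_surj x
  obtain ⟨Y, rfl⟩ := cls_surj y
  rw [← cls_append, ← cls_append, cls_eq] at h
  have h' := h.reverse
  rw [List.reverse_append, List.reverse_append, ← cls_eq, cls_append, cls_append] at h'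
  have h2 := (cls_eq.1 (bm_left_cancel h')).reverse
  rw [List.reverse_reverse, List.reverse_reverse] at h2
  exact cls_eq.2 h2

/-! ### The Garside element in the braid monoid -/

/-- The generator with index `j`, extended by `1` outside the valid range. -/
def gn (m j : ℕ) : BM m := if h : j < m then gen ⟨j, h⟩ else 1

/-- The descending product `σ_{k-1} ⋯ σ_0`. -/
def dn (m k : ℕ) : BM m := ((List.range k).reverse.map (gn m)).prod

/-- The ascending product `σ_0 ⋯ σ_{k-1}`. -/
def up (m k : ℕ) : BM m := ((List.range k).map (gn m)).prod

/-- The Garside element on the first `k` generators. -/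
def gars (m k : ℕ) : BM m := ((List.range k).map (fun k => dn m (k + 1))).prod

theorem dn_succ (m k : ℕ) : dn m (k + 1) = gn m k * dn m k := by
  simp [dn, List.range_succ]

theorem up_succ (m k : ℕ) : up m (k + 1) = up m k * gn m k := by
  simp [up, List.range_succ]

theorem gars_succ (m k : ℕ) : gars m (k + 1) = gars m k * dn m (k + 1) := by
  simp [gars, List.range_succ]

theorem gn_comm {m i j : ℕ} (h : i + 1 < j) : gn m i * gn m j = gn m j * gn m i := by
  unfold gn
  split_ifs with h1 h2
  · exact gen_comm (.inl h)
  all_goals simp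

theorem gn_braid {m i : ℕ} (h : i + 1 < m) :
    gn m i * (gn m (i + 1) * gn m i) = gn m (i + 1) * (gn m i * gn m (i + 1)) := by
  unfold gn
  rw [dif_pos h, dif_pos (by omega)]
  exact gen_braid (.inl rfl)

theorem gn_comm_dn {m k j : ℕ} (h : k < j) : gn m j * dn m k = dn m k * gn m j := by
  induction k with
  | zero => simp [dn]
  | succ k ih =>
    rw [dn_succ, ← mul_assoc, ← gn_comm (by omega : k + 1 < j), mul_assoc, ih (by omega),
      mul_assoc]

theorem gn_comm_up {m k j : ℕ} (h : k < j) : gn m j * up m k = up m k * gn m j := by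
  induction k with
  | zero => simp [up]
  | succ k ih =>
    rw [up_succ, ← mul_assoc, ih (by omega), mul_assoc, mul_assoc,
      gn_comm (by omega : k + 1 < j)]

theorem gn_comm_gars {m k j : ℕ} (h : k < j) : gn m j * gars m k = gars m k * gn m j := by
  induction k with
  | zero => simp [gars]
  | succ k ih =>
    rw [gars_succ, ← mul_assoc, ih (by omega), mul_assoc, gn_comm_dn (by omega), mul_assoc]

theorem dn_mul_gn {m k i : ℕ} (h : i + 1 < k) (hk : k ≤ m) :
    dn m k * gn m (i + 1) = gn m i * dn m k := by
  induction k with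
  | zero => omega
  | succ k ih =>
    rcases Nat.lt_or_ge (i + 1) k with h' | h'
    · rw [dn_succ, mul_assoc, ih h' (by omega), ← mul_assoc, ← gn_comm h', mul_assoc]
    · obtain rfl : k = i + 1 := by omega
      rw [dn_succ, dn_succ, mul_assoc, mul_assoc, ← gn_comm_dn (by omega : i < i + 1),
        ← mul_assoc (gn m i), ← mul_assoc (gn m (i + 1)), ← gn_braid (by omega)]
      simp only [mul_assoc]

theorem gn_mul_up {m k i : ℕ} (h : i + 1 < k) (hk : k ≤ m) :
    gn m (i + 1) * up m k = up m k * gn m i := by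
  induction k with
  | zero => omega
  | succ k ih =>
    rcases Nat.lt_or_ge (i + 1) k with h' | h'
    · rw [up_succ, ← mul_assoc, ih h' (by omega), mul_assoc, gn_comm h', mul_assoc]
    · obtain rfl : k = i + 1 := by omega
      rw [up_succ, up_succ, ← mul_assoc, ← mul_assoc, gn_comm_up (by omega : i < i + 1)]
      simp only [mul_assoc]
      rw [gn_braid (by omega)]

theorem gars_mul_dn {m k : ℕ} : gars m k * dn m (k + 1) = up m (k + 1) * gars m k := by
  induction k with
  | zero => simp [gars, dn, up]
  | succ k ih =>
    calc gars m (k + 1) * dn m (k + 2)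
        = gars m k * dn m (k + 1) * (gn m (k + 1) * dn m (k + 1)) := by
          rw [gars_succ, dn_succ m (k + 1)]
      _ = up m (k + 1) * (gars m k * gn m (k + 1)) * dn m (k + 1) := by
          rw [ih]; simp only [mul_assoc]
      _ = up m (k + 2) * gars m (k + 1) := by
          rw [← gn_comm_gars (by omega : k < k + 1), up_succ m (k + 1), gars_succ]
          simp only [mul_assoc]

/-- The Garside element conjugates `σ_i` to the generator with the complementary index. -/
theorem gars_mul_gn {m k : ℕ} (hk : k < m) : ∀ {i j : ℕ}, i + j = k →
    gars m (k + 1) * gn m i = gn m j * gars m (k + 1) := by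
  induction k with
  | zero =>
    intro i j h
    obtain ⟨rfl, rfl⟩ : i = 0 ∧ j = 0 := by omega
    simp [gars, dn]
  | succ k ih =>
    intro i j h
    cases i with
    | succ i =>
      rw [gars_succ m (k + 1), mul_assoc, dn_mul_gn (by omega) (by omega), ← mul_assoc,
        ih (by omega) (by omega : i + j = k), mul_assoc]
    | zero =>
      obtain rfl : j = k + 1 := by omega
      rw [gars_succ m (k + 1), gars_mul_dn, mul_assoc, ih (by omega) (by omega : 0 + k = k),
        ← mul_assoc, ← gn_mul_up (by omega) (by omega), mul_assoc]

/-- The square of the Garside element of the braid monoid. -/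
def fullTwist (m : ℕ) : BM m := gars m m * gars m m

theorem gn_of (m : ℕ) (i : Fin m) : gn m i = gen i := dif_pos i.2

theorem fullTwist_comm_gen {m : ℕ} (i : Fin m) :
    fullTwist m * gen i = gen i * fullTwist m := by
  obtain ⟨k, rfl⟩ : ∃ k, m = k + 1 := ⟨m - 1, by have := i.2; omega⟩
  rw [← gn_of, fullTwist, mul_assoc,
    gars_mul_gn (Nat.lt_succ_self k) (by omega : (i : ℕ) + (k - i) = k), ← mul_assoc,
    gars_mul_gn (Nat.lt_succ_self k) (by omega : (k - i) + (i : ℕ) = k), mul_assoc]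

theorem fullTwist_comm {m : ℕ} (x : BM m) : fullTwist m * x = x * fullTwist m := by
  obtain ⟨u, rfl⟩ := cls_surj x
  induction u with
  | nil => simp [cls_nil]
  | cons i u ih =>
    rw [cls_cons, ← mul_assoc, fullTwist_comm_gen, mul_assoc, ih, mul_assoc]

theorem exists_dn_eq {m k i : ℕ} (h : i < k) : ∃ a b, dn m k = a * gn m i * b := by
  induction k with
  | zero => omega
  | succ k ih =>
    rcases Nat.lt_or_ge i k with h' | h'
    · obtain ⟨a, b, e⟩ := ih h'
      exact ⟨gn m k * a, b, by rw [dn_succ, e]; simp only [mul_assoc]⟩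
    · obtain rfl : k = i := by omega
      exact ⟨1, dn m k, by rw [dn_succ, one_mul]⟩

theorem exists_gen_mul {m : ℕ} (i : Fin m) : ∃ y, fullTwist m = gen i * y ∧
    fullTwist m = y * gen i := by
  obtain ⟨k, hk⟩ : ∃ k, m = k + 1 := ⟨m - 1, by have := i.2; omega⟩
  obtain ⟨a, b, e⟩ := exists_dn_eq (m := m) i.2
  have h : fullTwist m = gars m k * a * gen i * (b * gars m m) := by
    rw [fullTwist]
    nth_rw 1 [show gars m m = gars m k * dn m m by
      have := gars_succ m k; rw [← hk] at this; exact this]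
    rw [e, gn_of]; simp only [mul_assoc]
  generalize gars m k * a = u at h
  generalize b * gars m m = v at h
  refine ⟨v * u, ?_, ?_⟩
  · apply bm_left_cancel (a := u)
    rw [← fullTwist_comm, h]; simp only [mul_assoc]
  · apply bm_right_cancel (a := v)
    rw [fullTwist_comm, h]; simp only [mul_assoc]

/-! ### The braid monoid embeds in the braid group -/

/-- Powers of the central element `Δ²` form an Ore set, with trivial Ore numerators and
denominators. -/
noncomputable instance oreSet (m : ℕ) :
    OreLocalization.OreSet (Submonoid.powers (fullTwist m)) where
  ore_right_cancel r₁ r₂ s h := ⟨1, by rw [bm_right_cancel h]⟩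
  oreNum r _ := r
  oreDenom _ s := s
  ore_eq r s := by
    obtain ⟨_, k, rfl⟩ := s
    exact (Commute.pow_left (fullTwist_comm r) k)

/-- The localization of the braid monoid at the powers of `Δ²`. -/
abbrev Loc (m : ℕ) := OreLocalization (Submonoid.powers (fullTwist m)) (BM m)

/-- The canonical map to the localization. -/
noncomputable def locHom (m : ℕ) : BM m →* Loc m := OreLocalization.numeratorHom

theorem locHom_injective (m : ℕ) : Function.Injective (locHom m) := by
  intro x y h
  obtain ⟨u, v, h1, h2⟩ := OreLocalization.oreDiv_eq_iff.1 h
  simp only [Submonoid.smul_def, smul_eq_mul, OneMemClass.coe_one, mul_one] at h1 h2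
  rw [← h2] at h1
  exact (bm_left_cancel h1).symm

theorem isUnit_locHom_gen {m : ℕ} (i : Fin m) : IsUnit (locHom m (gen i)) := by
  obtain ⟨y, h1, h2⟩ := exists_gen_mul i
  have hu : IsUnit (locHom m (fullTwist m)) :=
    OreLocalization.numerator_isUnit (⟨_, Submonoid.mem_powers _⟩ : Submonoid.powers (fullTwist m))
  obtain ⟨w, hw⟩ := hu
  rw [isUnit_iff_exists_and_exists]
  refine ⟨⟨locHom m y * ↑w⁻¹, ?_⟩, ⟨↑w⁻¹ * locHom m y, ?_⟩⟩
  · rw [← mul_assoc, ← map_mul, ← h1, ← hw, Units.mul_inv]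
  · rw [mul_assoc, ← map_mul, ← h2, ← hw, Units.inv_mul]

theorem sigma_comm {n : ℕ} {i j : Fin (n - 1)} (h : Far i j) : σ (n := n) i * σ j = σ j * σ i := by
  wlog h' : (i : ℕ) + 1 < j generalizing i j
  · exact (this h.symm (h.resolve_left h')).symm
  have := PresentedGroup.one_of_mem (rels := braidRels (n - 1)) (.inl ⟨i, j, h', rfl⟩)
  simp only [map_mul, map_inv] at this
  rw [mul_inv_eq_one, mul_inv_eq_iff_eq_mul] at this
  exact this

theorem sigma_braid {n : ℕ} {i j : Fin (n - 1)} (h : Adj i j) :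
    σ (n := n) i * σ j * σ i = σ j * σ i * σ j := by
  wlog h' : (i : ℕ) + 1 = j generalizing i j
  · exact (this h.symm (h.resolve_left h')).symm
  have := PresentedGroup.one_of_mem (rels := braidRels (n - 1)) (.inr ⟨i, j, h', rfl⟩)
  simp only [map_mul, map_inv] at this
  rw [mul_inv_eq_one, mul_inv_eq_iff_eq_mul, mul_inv_eq_iff_eq_mul] at this
  exact this

/-- The positive braid represented by a positive word. -/
def wd {n : ℕ} (u : List (Fin (n - 1))) : B n := (u.map σ).prod

theorem wd_append {n : ℕ} (u v : List (Fin (n - 1))) : wd (n := n) (u ++ v) = wd u * wd v := by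
  simp [wd]

theorem wd_nil {n : ℕ} : wd (n := n) [] = 1 := rfl

theorem wd_cons {n : ℕ} (i : Fin (n - 1)) (u : List (Fin (n - 1))) :
    wd (n := n) (i :: u) = σ i * wd u := by
  simp [wd]

theorem wd_single {n : ℕ} (i : Fin (n - 1)) : wd (n := n) [i] = σ i := by
  simp [wd]

theorem Step.wd_eq {n : ℕ} {u v : List (Fin (n - 1))} (h : Step u v) :
    wd (n := n) u = wd v := by
  obtain ⟨a, b, l, r, h, rfl, rfl⟩ := h
  have : wd (n := n) l = wd r := by
    cases h with
    | comm i j h => simpa [wd] using sigma_comm h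
    | braid i j h => simpa [wd, mul_assoc] using sigma_braid h
  simp only [wd_append, this]

theorem Eqv.wd_eq {n : ℕ} {u v : List (Fin (n - 1))} (h : Eqv u v) :
    wd (n := n) u = wd v := by
  induction h with
  | refl => rfl
  | tail _ h ih => exact ih.trans h.wd_eq

/-- The map from the braid group to the units of the localization. -/
noncomputable def toLoc (n : ℕ) : B n →* (Loc (n - 1))ˣ :=
  PresentedGroup.toGroup (f := fun i => (isUnit_locHom_gen i).unit) (by
    rintro r (⟨i, j, h, rfl⟩ | ⟨i, j, h, rfl⟩)
    · simp only [map_mul, map_inv, FreeGroup.lift_apply_of]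
      rw [mul_inv_eq_one, mul_inv_eq_iff_eq_mul, Units.ext_iff]
      simp only [Units.val_mul, IsUnit.unit_spec, ← map_mul]
      rw [gen_comm (.inl h)]
    · simp only [map_mul, map_inv, FreeGroup.lift_apply_of]
      rw [mul_inv_eq_one, mul_inv_eq_iff_eq_mul, mul_inv_eq_iff_eq_mul, Units.ext_iff]
      simp only [Units.val_mul, IsUnit.unit_spec, ← map_mul, mul_assoc]
      rw [gen_braid (.inl h)])

theorem toLoc_wd {n : ℕ} (u : List (Fin (n - 1))) :
    (toLoc n (wd u) : Loc (n - 1)) = locHom _ (cls u) := by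
  induction u with
  | nil => simp [wd_nil, cls_nil]
  | cons i u ih =>
    rw [wd_cons, cls_cons, map_mul, map_mul, Units.val_mul, ih]
    congr 1
    rw [σ, toLoc, PresentedGroup.toGroup.of, IsUnit.unit_spec]

/-- Positive words represent the same braid only if they are related by positive braid relations:
the braid monoid embeds in the braid group. -/
theorem wd_eq_iff {n : ℕ} {u v : List (Fin (n - 1))} : wd (n := n) u = wd v ↔ Eqv u v := by
  refine ⟨fun h => ?_, Eqv.wd_eq⟩
  rw [← cls_eq]
  apply locHom_injective
  rw [← toLoc_wd, ← toLoc_wd, h]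

theorem wd_mem {n : ℕ} (u : List (Fin (n - 1))) : wd u ∈ P n := by
  induction u with
  | nil => exact one_mem _
  | cons i u ih =>
    rw [wd_cons]
    exact mul_mem (Submonoid.subset_closure ⟨i, rfl⟩) ih

theorem mem_P_iff {n : ℕ} {x : B n} : x ∈ P n ↔ ∃ u, wd u = x := by
  refine ⟨fun h => ?_, fun ⟨u, h⟩ => h ▸ wd_mem u⟩
  induction h using Submonoid.closure_induction with
  | mem x hx => obtain ⟨i, rfl⟩ := hx; exact ⟨[i], wd_single i⟩
  | one => exact ⟨[], rfl⟩
  | mul x y _ _ hx hy =>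
    obtain ⟨u, rfl⟩ := hx
    obtain ⟨v, rfl⟩ := hy
    exact ⟨u ++ v, wd_append u v⟩

/-- The canonical map from the braid monoid to the braid group. -/
def toB (n : ℕ) : BM (n - 1) →* B n :=
  Con.lift (braidCon (n - 1)) (FreeMonoid.lift σ) (fun u v h => by
    have := Eqv.wd_eq (n := n) h
    simpa [wd, FreeMonoid.lift_apply] using this)

theorem toB_cls {n : ℕ} (u : List (Fin (n - 1))) : toB n (cls u) = wd u := by
  simp [toB, cls, wd, FreeMonoid.lift_apply]

theorem toB_gars (n : ℕ) : toB n (gars (n - 1) (n - 1)) = Δ n := by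
  have h1 : ∀ j, toB n (gn (n - 1) j) = σ' j := by
    intro j
    unfold gn σ'
    split_ifs
    · rw [gen, toB_cls, wd_single]
    · exact map_one _
  simp only [gars, Δ, map_list_prod, List.map_map, dn]
  congr 2
  funext k
  simp [map_list_prod, Function.comp_def, h1]

/-! ### The divisibility lattice of the braid group -/

/-- The central element `Δ²` of the braid group. -/
def Om (n : ℕ) : B n := Δ n * Δ n

theorem toB_fullTwist (n : ℕ) : toB n (fullTwist (n - 1)) = Om n := by
  rw [fullTwist, map_mul, toB_gars, Om]

theorem toB_mem {n : ℕ} (x : BM (n - 1)) : toB n x ∈ P n := by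
  obtain ⟨u, rfl⟩ := cls_surj x
  rw [toB_cls]; exact wd_mem u

theorem toB_gen {n : ℕ} (i : Fin (n - 1)) : toB n (gen i) = σ i := by
  rw [gen, toB_cls, wd_single]

theorem delta_mem (n : ℕ) : Δ n ∈ P n := by
  rw [← toB_gars]; exact toB_mem _

theorem Om_mem (n : ℕ) : Om n ∈ P n := mul_mem (delta_mem n) (delta_mem n)

theorem sigma_mem {n : ℕ} (i : Fin (n - 1)) : σ i ∈ P n := Submonoid.subset_closure ⟨i, rfl⟩

/-- Induction over the braid group from generators and their inverses. -/
theorem braid_induction {n : ℕ} {p : B n → Prop} (h1 : p 1) (hσ : ∀ i, p (σ i))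
    (hi : ∀ i, p (σ i)⁻¹) (hm : ∀ x y, p x → p y → p (x * y)) (x : B n) : p x := by
  have hx : x ∈ Subgroup.closure (Set.range (σ (n := n))) := by
    have := PresentedGroup.closure_range_of (braidRels (n - 1))
    change Subgroup.closure (Set.range (σ (n := n))) = ⊤ at this
    rw [this]; trivial
  rw [← Subgroup.mem_toSubmonoid, Subgroup.closure_toSubmonoid] at hx
  induction hx using Submonoid.closure_induction with
  | mem x hx =>
    rcases hx with ⟨i, rfl⟩ | ⟨i, hi'⟩
    · exact hσ i
    · rw [← inv_inv x, ← hi']; exact hi i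
  | one => exact h1
  | mul x y _ _ hx hy => exact hm x y hx hy

theorem Om_comm {n : ℕ} (x : B n) : Om n * x = x * Om n := by
  have h : ∀ i, Commute (Om n) (σ i) := by
    intro i
    have := congrArg (toB n) (fullTwist_comm (gen i))
    simp only [map_mul, toB_fullTwist, toB_gen] at this
    exact this
  exact braid_induction (p := fun x => Commute (Om n) x) (Commute.one_right _) h
    (fun i => (h i).inv_right) (fun x y hx hy => hx.mul_right hy) x

theorem Om_zpow_comm {n : ℕ} (k : ℤ) (x : B n) : Om n ^ k * x = x * Om n ^ k :=
  (show Commute (Om n) x from Om_comm x).zpow_left k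

theorem Om_pow_comm {n : ℕ} (k : ℕ) (x : B n) : Om n ^ k * x = x * Om n ^ k :=
  (show Commute (Om n) x from Om_comm x).pow_left k

theorem Om_mul_sigma_inv {n : ℕ} (i : Fin (n - 1)) : Om n * (σ i)⁻¹ ∈ P n := by
  obtain ⟨y, -, h⟩ := exists_gen_mul i
  rw [← toB_fullTwist, h, map_mul, toB_gen, mul_inv_cancel_right]
  exact toB_mem y

theorem exists_pow_mul_mem {n : ℕ} (x : B n) : ∃ k : ℕ, Om n ^ k * x ∈ P n := by
  refine braid_induction (p := fun x => ∃ k : ℕ, Om n ^ k * x ∈ P n) ⟨0, by simp⟩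
    (fun i => ⟨0, by simpa using sigma_mem i⟩) (fun i => ⟨1, by simpa using Om_mul_sigma_inv i⟩)
    ?_ x
  rintro x y ⟨k, hk⟩ ⟨l, hl⟩
  refine ⟨k + l, ?_⟩
  rw [show Om n ^ (k + l) * (x * y) = (Om n ^ k * x) * (Om n ^ l * y) by
    rw [pow_add, mul_assoc, ← mul_assoc _ x, Om_pow_comm l x]; simp only [mul_assoc]]
  exact mul_mem hk hl

/-- The exponent sum homomorphism, written multiplicatively. -/
noncomputable def lnHom (n : ℕ) : B n →* Multiplicative ℤ :=
  PresentedGroup.toGroup (f := fun _ => Multiplicative.ofAdd 1) (by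
    rintro r (⟨i, j, h, rfl⟩ | ⟨i, j, h, rfl⟩) <;> simp)

/-- The exponent sum of a braid. -/
noncomputable def ln {n : ℕ} (x : B n) : ℤ := (lnHom n x).toAdd

theorem ln_mul {n : ℕ} (x y : B n) : ln (x * y) = ln x + ln y := by simp [ln]

theorem ln_inv {n : ℕ} (x : B n) : ln x⁻¹ = -ln x := by simp [ln]

theorem ln_pow {n : ℕ} (x : B n) (k : ℕ) : ln (x ^ k) = k * ln x := by simp [ln]

theorem ln_one {n : ℕ} : ln (1 : B n) = 0 := by simp [ln]

theorem ln_sigma {n : ℕ} (i : Fin (n - 1)) : ln (σ (n := n) i) = 1 := by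
  simp [ln, lnHom, σ, PresentedGroup.toGroup.of]

theorem ln_wd {n : ℕ} (u : List (Fin (n - 1))) : ln (wd (n := n) u) = u.length := by
  induction u with
  | nil => simp [wd_nil, ln_one]
  | cons i u ih => rw [wd_cons, ln_mul, ih, ln_sigma]; push_cast [List.length_cons]; ring

theorem ln_nonneg {n : ℕ} {x : B n} (h : x ∈ P n) : 0 ≤ ln x := by
  obtain ⟨u, rfl⟩ := mem_P_iff.1 h
  rw [ln_wd]; positivity

theorem eq_one_of_ln {n : ℕ} {x : B n} (h : x ∈ P n) (h0 : ln x ≤ 0) : x = 1 := by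
  obtain ⟨u, rfl⟩ := mem_P_iff.1 h
  rw [ln_wd] at h0
  obtain rfl : u = [] := List.length_eq_zero_iff.1 (by omega)
  rfl

/-- `a ≤ b` means that `a` divides `b` on the left. -/
instance braidOrder (n : ℕ) : PartialOrder (B n) where
  le a b := a⁻¹ * b ∈ P n
  le_refl a := by simp
  le_trans a b c h h' := by
    have := mul_mem h h'
    rwa [mul_assoc, mul_inv_cancel_left] at this
  le_antisymm a b h h' := by
    have h1 := ln_nonneg h'
    rw [ln_mul, ln_inv] at h1
    have := eq_one_of_ln h (by rw [ln_mul, ln_inv]; omega)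
    exact (inv_mul_eq_one.1 this)

theorem le_def {n : ℕ} {a b : B n} : a ≤ b ↔ a⁻¹ * b ∈ P n := Iff.rfl

theorem one_le_iff {n : ℕ} {a : B n} : 1 ≤ a ↔ a ∈ P n := by simp [le_def]

instance braidMulLeftMono (n : ℕ) : MulLeftMono (B n) where
  elim c a b h := by
    change a⁻¹ * b ∈ P n at h
    change (c * a)⁻¹ * (c * b) ∈ P n
    rwa [mul_inv_rev, mul_assoc, inv_mul_cancel_left]

theorem ln_mono {n : ℕ} {a b : B n} (h : a ≤ b) : ln a ≤ ln b := by
  have := ln_nonneg (le_def.1 h)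
  rw [ln_mul, ln_inv] at this
  omega

theorem eq_of_le_of_ln {n : ℕ} {a b : B n} (h : a ≤ b) (h' : ln b ≤ ln a) : a = b :=
  inv_mul_eq_one.1 (eq_one_of_ln h (by rw [ln_mul, ln_inv]; omega))

theorem exists_sigma_le {n : ℕ} {a b : B n} (h : a ≤ b) (hne : a ≠ b) : ∃ i, a * σ i ≤ b := by
  obtain ⟨u, hu⟩ := mem_P_iff.1 (le_def.1 h)
  cases u with
  | nil => exact absurd (inv_mul_eq_one.1 hu.symm) hne
  | cons i u =>
    refine ⟨i, ?_⟩
    rw [le_def, mul_inv_rev, mul_assoc, ← hu, wd_cons, inv_mul_cancel_left]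
    exact wd_mem u

/-- Two generators have a least common right multiple. -/
theorem exists_lcm_sigma {n : ℕ} (i j : Fin (n - 1)) :
    ∃ L : B n, σ i ≤ L ∧ σ j ≤ L ∧ ∀ p, σ i ≤ p → σ j ≤ p → L ≤ p := by
  have key : ∀ p : B n, σ i ≤ p → σ j ≤ p →
      ∃ X Y, p = σ i * wd X ∧ LcmAt i j (cls X) (cls Y) := by
    intro p hi hj
    obtain ⟨X, hX⟩ := mem_P_iff.1 (le_def.1 hi)
    obtain ⟨Y, hY⟩ := mem_P_iff.1 (le_def.1 hj)
    rw [eq_inv_mul_iff_mul_eq] at hX hY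
    refine ⟨X, Y, hX.symm, lcmAt_of_eq ?_⟩
    rw [← cls_cons, ← cls_cons, cls_eq, ← wd_eq_iff (n := n), wd_cons, wd_cons, hX, hY]
  have le_mul : ∀ a b : B n, b ∈ P n → a ≤ a * b := by
    intro a b hb
    rwa [le_def, inv_mul_cancel_left]
  rcases eq_or_far_or_adj i j with rfl | h | h
  · exact ⟨σ i, le_rfl, le_rfl, fun p hp _ => hp⟩
  · refine ⟨σ i * σ j, le_mul _ _ (sigma_mem _), ?_, fun p hi hj => ?_⟩
    · rw [sigma_comm h]; exact le_mul _ _ (sigma_mem _)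
    · obtain ⟨X, Y, rfl, hh⟩ := key p hi hj
      rcases hh with ⟨rfl, -⟩ | ⟨-, z, hz, -⟩ | ⟨h', -⟩
      · unfold Far at h; omega
      · rw [← toB_cls, hz, map_mul, toB_gen, ← mul_assoc]
        exact le_mul _ _ (toB_mem _)
      · unfold Far at h; unfold Adj at h'; omega
  · refine ⟨σ i * σ j * σ i, ?_, ?_, fun p hi hj => ?_⟩
    · rw [mul_assoc]; exact le_mul _ _ (mul_mem (sigma_mem _) (sigma_mem _))
    · rw [sigma_braid h, mul_assoc]; exact le_mul _ _ (mul_mem (sigma_mem _) (sigma_mem _))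
    · obtain ⟨X, Y, rfl, hh⟩ := key p hi hj
      rcases hh with ⟨rfl, -⟩ | ⟨h', -⟩ | ⟨-, z, hz, -⟩
      · unfold Adj at h; omega
      · unfold Far at h'; unfold Adj at h; omega
      · rw [← toB_cls, hz, map_mul, map_mul, toB_gen, toB_gen, ← mul_assoc, ← mul_assoc]
        exact le_mul _ _ (toB_mem _)

/-- Common left divisors of `a` and `b` that have a common lower bound also have a common upper
bound among the common left divisors (a Newman-style diamond argument). -/
theorem newman {n : ℕ} {a b : B n} (N : ℕ) : ∀ c z1 z2 : B n, c ≤ z1 → c ≤ z2 → z1 ≤ a → z1 ≤ b →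
    z2 ≤ a → z2 ≤ b → ln a - ln c ≤ N → ∃ w, z1 ≤ w ∧ z2 ≤ w ∧ w ≤ a ∧ w ≤ b := by
  induction N with
  | zero =>
    intro c z1 z2 h1 h2 h1a h1b h2a h2b hl
    have := ln_mono h1a
    obtain rfl := eq_of_le_of_ln h1 (by push_cast at hl; omega)
    exact ⟨z2, h2, le_rfl, h2a, h2b⟩
  | succ N ih =>
    intro c z1 z2 h1 h2 h1a h1b h2a h2b hl
    by_cases e1 : c = z1
    · subst e1; exact ⟨z2, h2, le_rfl, h2a, h2b⟩
    by_cases e2 : c = z2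
    · subst e2; exact ⟨z1, le_rfl, h1, h1a, h1b⟩
    obtain ⟨i, hi⟩ := exists_sigma_le h1 e1
    obtain ⟨j, hj⟩ := exists_sigma_le h2 e2
    obtain ⟨L, hLi, hLj, hL⟩ := exists_lcm_sigma (n := n) i j
    have hc : ∀ p : B n, c * σ i ≤ p → c * σ j ≤ p → c * L ≤ p := by
      intro p hp hp'
      rw [← le_inv_mul_iff_mul_le] at hp hp' ⊢
      exact hL _ hp hp'
    have hLi' : c * σ i ≤ c * L := mul_le_mul_right hLi c
    have hLj' : c * σ j ≤ c * L := mul_le_mul_right hLj c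
    have ea := hc a (hi.trans h1a) (hj.trans h2a)
    have eb := hc b (hi.trans h1b) (hj.trans h2b)
    have l1 : ln a - ln (c * σ i) ≤ N := by rw [ln_mul, ln_sigma]; push_cast at hl; omega
    have l2 : ln a - ln (c * σ j) ≤ N := by rw [ln_mul, ln_sigma]; push_cast at hl; omega
    obtain ⟨w1, p1, p2, p3, p4⟩ := ih _ z1 (c * L) hi hLi' h1a h1b ea eb l1
    obtain ⟨w2, q1, q2, q3, q4⟩ := ih _ z2 (c * L) hj hLj' h2a h2b ea eb l2
    obtain ⟨w, r1, r2, r3, r4⟩ :=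
      ih _ w1 w2 (hLi'.trans p2) (hLi'.trans q2) p3 p4 q3 q4 l1
    exact ⟨w, p1.trans r1, q1.trans r2, r3, r4⟩

theorem one_le_Om_pow (n k : ℕ) : 1 ≤ Om n ^ k := one_le_iff.2 (pow_mem (Om_mem n) k)

theorem exists_lower {n : ℕ} (a b : B n) : ∃ c, c ≤ a ∧ c ≤ b := by
  obtain ⟨k, hk⟩ := exists_pow_mul_mem a
  obtain ⟨l, hl⟩ := exists_pow_mul_mem b
  refine ⟨(Om n ^ (k + l))⁻¹, ?_, ?_⟩
  · rw [le_def, inv_inv, add_comm, pow_add, mul_assoc]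
    exact mul_mem (pow_mem (Om_mem n) _) hk
  · rw [le_def, inv_inv, pow_add, mul_assoc]
    exact mul_mem (pow_mem (Om_mem n) _) hl

theorem exists_upper {n : ℕ} (a b : B n) : ∃ c, a ≤ c ∧ b ≤ c := by
  obtain ⟨k, hk⟩ := exists_pow_mul_mem a⁻¹
  obtain ⟨l, hl⟩ := exists_pow_mul_mem b⁻¹
  refine ⟨Om n ^ (k + l), ?_, ?_⟩
  · rw [le_def, ← Om_pow_comm, add_comm, pow_add, mul_assoc]
    exact mul_mem (pow_mem (Om_mem n) _) hk
  · rw [le_def, ← Om_pow_comm, pow_add, mul_assoc]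
    exact mul_mem (pow_mem (Om_mem n) _) hl

theorem exists_meet {n : ℕ} (a b : B n) : ∃ d, d ≤ a ∧ d ≤ b ∧ ∀ z, z ≤ a → z ≤ b → z ≤ d := by
  obtain ⟨c0, hc0⟩ := exists_lower a b
  obtain ⟨d, ⟨hda, hdb⟩, hd⟩ := WellFounded.has_min
    (measure (fun z : B n => (ln a - ln z).toNat)).wf {z | z ≤ a ∧ z ≤ b} ⟨c0, hc0⟩
  refine ⟨d, hda, hdb, fun z hza hzb => ?_⟩
  obtain ⟨c, hcd, hcz⟩ := exists_lower d z
  obtain ⟨w, h1, h2, h3, h4⟩ :=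
    newman (ln a - ln c).toNat c d z hcd hcz hda hdb hza hzb (Int.self_le_toNat _)
  have := hd w ⟨h3, h4⟩
  change ¬ ((ln a - ln w).toNat < (ln a - ln d).toNat) at this
  have := ln_mono h3
  have := ln_mono hda
  rw [eq_of_le_of_ln h1 (by omega)]
  exact h2

theorem exists_join {n : ℕ} (a b : B n) : ∃ d, a ≤ d ∧ b ≤ d ∧ ∀ z, a ≤ z → b ≤ z → d ≤ z := by
  obtain ⟨c0, hc0⟩ := exists_upper a b
  obtain ⟨d, ⟨hda, hdb⟩, hd⟩ := WellFounded.has_min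
    (measure (fun z : B n => (ln z - ln a).toNat)).wf {z | a ≤ z ∧ b ≤ z} ⟨c0, hc0⟩
  refine ⟨d, hda, hdb, fun z hza hzb => ?_⟩
  obtain ⟨w, h1, h2, h3⟩ := exists_meet d z
  have haw := h3 a hda hza
  have := hd w ⟨haw, h3 b hdb hzb⟩
  change ¬ ((ln w - ln a).toNat < (ln d - ln a).toNat) at this
  have := ln_mono haw
  have := ln_mono hda
  rw [← eq_of_le_of_ln h1 (by omega)]
  exact h2

noncomputable instance braidLattice (n : ℕ) : Lattice (B n) where
  inf a b := (exists_meet a b).choose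
  inf_le_left a b := (exists_meet a b).choose_spec.1
  inf_le_right a b := (exists_meet a b).choose_spec.2.1
  le_inf z a b h h' := (exists_meet a b).choose_spec.2.2 z h h'
  sup a b := (exists_join a b).choose
  le_sup_left a b := (exists_join a b).choose_spec.1
  le_sup_right a b := (exists_join a b).choose_spec.2.1
  sup_le a b z h h' := (exists_join a b).choose_spec.2.2 z h h'

/-! ### A path theorem for antitone maps on lattice-ordered groups -/

/-- `f` exchanges joins and meets, and inverts translation by powers of `q`. -/
structure Anti {G : Type*} [Group G] [Lattice G] (q : G) (f : G → G) : Prop where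
  sup : ∀ a b, f (a ⊔ b) = f a ⊓ f b
  inf : ∀ a b, f (a ⊓ b) = f a ⊔ f b
  tw : ∀ (z : ℤ) (a : G), f (q ^ z * a) = q ^ (-z) * f a

/-- A pair of sequences `A ≤ Z` of width `w` (that is, `Z ≤ q ^ w A`), both running from `c` to `c'`
in steps bounded by `q ^ {±1}`, which behave like solutions of `f u ≤ u ≤ h u` when evaluated
crosswise. -/
structure Corridor {G : Type*} [Group G] [Lattice G] (q : G) (f h : G → G) (c c' : G) (k : ℕ)
    (w : ℤ) (A Z : ℕ → G) : Prop where
  AZ : ∀ t ≤ k, A t ≤ Z t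
  ZA : ∀ t ≤ k, Z t ≤ q ^ w * A t
  fA : ∀ t ≤ k, f (A t) ≤ Z t
  fZ : ∀ t ≤ k, f (Z t) ≤ A t
  hA : ∀ t ≤ k, Z t ≤ h (A t)
  hZ : ∀ t ≤ k, A t ≤ h (Z t)
  A1 : ∀ t < k, A (t + 1) ≤ q ^ (1 : ℤ) * A t
  A2 : ∀ t < k, A t ≤ q ^ (1 : ℤ) * A (t + 1)
  Z1 : ∀ t < k, Z (t + 1) ≤ q ^ (1 : ℤ) * Z t
  Z2 : ∀ t < k, Z t ≤ q ^ (1 : ℤ) * Z (t + 1)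
  A0 : A 0 = c
  Z0 : Z 0 = c
  Ak : A k = c'
  Zk : Z k = c'

theorem tw_tw {G : Type*} [Group G] {q : G} (a b : ℤ) (u : G) : q ^ a * (q ^ b * u) = q ^ (a + b) * u := by
  rw [zpow_add, mul_assoc]

section path

variable {G : Type*} [Group G] [Lattice G] [MulLeftMono G] {q : G}

theorem tw_le (hq : 1 ≤ q) (hc : ∀ a, q * a = a * q) {a b : ℤ} (hab : a ≤ b) {u v : G}
    (huv : u ≤ v) : q ^ a * u ≤ q ^ b * v := by
  obtain ⟨k, rfl⟩ : ∃ k : ℕ, b = a + k := ⟨(b - a).toNat, by omega⟩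
  rw [zpow_add, mul_assoc, zpow_natCast,
    show q ^ k * v = v * q ^ k from (show Commute q v from hc v).pow_left k]
  gcongr
  exact huv.trans (le_mul_of_one_le_right' (one_le_pow_of_one_le' hq k))

/-- Halving the width of a corridor. -/
theorem Corridor.halve (hq : 1 ≤ q) (hc : ∀ a, q * a = a * q) {f h : G → G} (hf : Anti q f)
    (hh : Anti q h) {c c' : G} {k : ℕ} {w : ℤ} (hw : 0 ≤ w) {A Z : ℕ → G}
    (H : Corridor q f h c c' k (2 * w) A Z) :
    Corridor q f h c c' k w (fun t => A t ⊔ q ^ (-w) * Z t) (fun t => Z t ⊓ q ^ w * A t) where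
  AZ t ht := by
    have e : ∀ u : G, u = q ^ (0 : ℤ) * u := fun u => by simp
    refine sup_le (le_inf (H.AZ t ht) ?_) (le_inf ?_ ?_)
    · conv_lhs => rw [e (A t)]
      exact tw_le hq hc hw le_rfl
    · conv_rhs => rw [e (Z t)]
      exact tw_le hq hc (by omega) le_rfl
    · refine (mul_le_mul_right (H.ZA t ht) _).trans ?_
      rw [tw_tw]
      exact tw_le hq hc (by omega) le_rfl
  ZA t ht := inf_le_right.trans (mul_le_mul_right le_sup_left _)
  fA t ht := by
    rw [hf.sup, hf.tw, neg_neg]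
    exact inf_le_inf (H.fA t ht) (mul_le_mul_right (H.fZ t ht) _)
  fZ t ht := by
    rw [hf.inf, hf.tw]
    exact sup_le_sup (H.fZ t ht) (mul_le_mul_right (H.fA t ht) _)
  hA t ht := by
    rw [hh.sup, hh.tw, neg_neg]
    exact inf_le_inf (H.hA t ht) (mul_le_mul_right (H.hZ t ht) _)
  hZ t ht := by
    rw [hh.inf, hh.tw]
    exact sup_le_sup (H.hZ t ht) (mul_le_mul_right (H.hA t ht) _)
  A1 t ht := by
    rw [mul_sup, tw_tw, add_comm 1, ← tw_tw]
    exact sup_le_sup (H.A1 t ht) (mul_le_mul_right (H.Z1 t ht) _)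
  A2 t ht := by
    rw [mul_sup, tw_tw, add_comm 1, ← tw_tw]
    exact sup_le_sup (H.A2 t ht) (mul_le_mul_right (H.Z2 t ht) _)
  Z1 t ht := by
    rw [mul_inf, tw_tw, add_comm 1, ← tw_tw]
    exact inf_le_inf (H.Z1 t ht) (mul_le_mul_right (H.A1 t ht) _)
  Z2 t ht := by
    rw [mul_inf, tw_tw, add_comm 1, ← tw_tw]
    exact inf_le_inf (H.Z2 t ht) (mul_le_mul_right (H.A2 t ht) _)
  A0 := by
    rw [H.A0, H.Z0, sup_eq_left]
    have := tw_le hq hc (by omega : -w ≤ 0) (le_refl c)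
    simpa using this
  Z0 := by
    rw [H.A0, H.Z0, inf_eq_left]
    have := tw_le hq hc hw (le_refl c)
    simpa using this
  Ak := by
    rw [H.Ak, H.Zk, sup_eq_left]
    have := tw_le hq hc (by omega : -w ≤ 0) (le_refl c')
    simpa using this
  Zk := by
    rw [H.Ak, H.Zk, inf_eq_left]
    have := tw_le hq hc hw (le_refl c')
    simpa using this

theorem Corridor.narrow (hq : 1 ≤ q) (hc : ∀ a, q * a = a * q) {f h : G → G} (hf : Anti q f)
    (hh : Anti q h) {c c' : G} {k : ℕ} (a : ℕ) : ∀ {A Z : ℕ → G},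
    Corridor q f h c c' k (2 ^ a) A Z → ∃ A Z, Corridor q f h c c' k 1 A Z := by
  induction a with
  | zero => intro A Z H; exact ⟨A, Z, by simpa using H⟩
  | succ a ih =>
    intro A Z H
    rw [pow_succ, mul_comm] at H
    exact ih (H.halve hq hc hf hh (by positivity))

/-- The initial corridor, of width `2 k`. -/
theorem corridor_init (hq : 1 ≤ q) (hc : ∀ a, q * a = a * q) {f h : G → G} (hf : Anti q f)
    (hh : Anti q h) {c c' : G} (k : ℕ) (h1 : f c ≤ c) (h2 : c ≤ h c) (h1' : f c' ≤ c')
    (h2' : c' ≤ h c') (hcc : c ≤ q ^ (k : ℤ) * c') (hcc' : c' ≤ q ^ (k : ℤ) * c) :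
    Corridor q f h c c' k (2 * k) (fun t => q ^ (-t : ℤ) * c ⊔ q ^ (t - k : ℤ) * c')
      (fun t => q ^ (t : ℤ) * c ⊓ q ^ (k - t : ℤ) * c') where
  AZ t ht := by
    refine sup_le (le_inf (tw_le hq hc (by omega) le_rfl) ?_)
      (le_inf ?_ (tw_le hq hc (by omega) le_rfl))
    · refine (mul_le_mul_right hcc _).trans ?_
      rw [tw_tw]; exact tw_le hq hc (by omega) le_rfl
    · refine (mul_le_mul_right hcc' _).trans ?_
      rw [tw_tw]; exact tw_le hq hc (by omega) le_rfl
  ZA t ht := by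
    rw [mul_sup, tw_tw]
    exact inf_le_left.trans (le_sup_of_le_left (tw_le hq hc (by omega) le_rfl))
  fA t ht := by
    rw [hf.sup, hf.tw, hf.tw]
    exact inf_le_inf (tw_le hq hc (by omega) h1) (tw_le hq hc (by omega) h1')
  fZ t ht := by
    rw [hf.inf, hf.tw, hf.tw]
    exact sup_le_sup (tw_le hq hc (by omega) h1) (tw_le hq hc (by omega) h1')
  hA t ht := by
    rw [hh.sup, hh.tw, hh.tw]
    exact inf_le_inf (tw_le hq hc (by omega) h2) (tw_le hq hc (by omega) h2')
  hZ t ht := by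
    rw [hh.inf, hh.tw, hh.tw]
    exact sup_le_sup (tw_le hq hc (by omega) h2) (tw_le hq hc (by omega) h2')
  A1 t ht := by
    rw [mul_sup, tw_tw, tw_tw]
    exact sup_le_sup (tw_le hq hc (by push_cast; omega) le_rfl)
      (tw_le hq hc (by push_cast; omega) le_rfl)
  A2 t ht := by
    rw [mul_sup, tw_tw, tw_tw]
    exact sup_le_sup (tw_le hq hc (by push_cast; omega) le_rfl)
      (tw_le hq hc (by push_cast; omega) le_rfl)
  Z1 t ht := by
    rw [mul_inf, tw_tw, tw_tw]
    exact inf_le_inf (tw_le hq hc (by push_cast; omega) le_rfl)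
      (tw_le hq hc (by push_cast; omega) le_rfl)
  Z2 t ht := by
    rw [mul_inf, tw_tw, tw_tw]
    exact inf_le_inf (tw_le hq hc (by push_cast; omega) le_rfl)
      (tw_le hq hc (by push_cast; omega) le_rfl)
  A0 := by
    have := mul_le_mul_right hcc' (q ^ (-k : ℤ))
    rw [tw_tw] at this
    simpa using this
  Z0 := by simpa using hcc
  Ak := by
    have := mul_le_mul_right hcc (q ^ (-k : ℤ))
    rw [tw_tw] at this
    simpa using this
  Zk := by simpa using hcc'

/-- Two solutions `c`, `c'` of `f u ≤ u ≤ h u` are joined by a path of solutions of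
`f u ≤ q u`, `u ≤ h u` whose steps are bounded by `q ^ {±1}`. -/
theorem exists_path (hq : 1 ≤ q) (hc : ∀ a, q * a = a * q) {f h : G → G} (hf : Anti q f)
    (hh : Anti q h) {c c' : G} (k : ℕ) (h1 : f c ≤ c) (h2 : c ≤ h c) (h1' : f c' ≤ c')
    (h2' : c' ≤ h c') (hcc : c ≤ q ^ k * c') (hcc' : c' ≤ q ^ k * c) :
    ∃ (k' : ℕ) (u : ℕ → G), u 0 = c ∧ u k' = c' ∧ (∀ t ≤ k', f (u t) ≤ q * u t ∧ u t ≤ h (u t)) ∧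
      ∀ t < k', u (t + 1) ≤ q * u t ∧ u t ≤ q * u (t + 1) := by
  -- enlarge `k` to a power of two
  have hk : k ≤ 2 ^ k := Nat.lt_two_pow_self.le
  have aux : ∀ {x y : G}, x ≤ q ^ k * y → x ≤ q ^ ((2 ^ k : ℕ) : ℤ) * y := by
    intro x y hxy
    rw [← zpow_natCast] at hxy
    exact hxy.trans (tw_le hq hc (by exact_mod_cast hk) le_rfl)
  have H := corridor_init hq hc hf hh (2 ^ k) h1 h2 h1' h2' (aux hcc) (aux hcc')
  rw [show (2 * ((2 ^ k : ℕ) : ℤ)) = 2 ^ (k + 1) by push_cast; ring] at H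
  obtain ⟨A, Z, H⟩ := H.narrow hq hc hf hh (k + 1)
  refine ⟨2 ^ k, A, H.A0, H.Ak, fun t ht => ⟨?_, ?_⟩, fun t ht => ⟨?_, ?_⟩⟩
  · simpa using (H.fA t ht).trans (H.ZA t ht)
  · exact (H.AZ t ht).trans (H.hA t ht)
  · simpa using H.A1 t ht
  · simpa using H.A2 t ht

end path

/-! ### Twisted conjugacy through positive words of bounded length -/

/-- `rev` is the anti-automorphism of the braid group fixing the generators. -/
structure IsRev {n : ℕ} (rev : B n → B n) : Prop where
  mul : ∀ x y : B n, rev (x * y) = rev y * rev x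
  gen : ∀ i : Fin (n - 1), rev (σ i) = σ i

namespace IsRev

variable {n : ℕ} {rev : B n → B n}

theorem one (hr : IsRev rev) : rev 1 = 1 := by
  have := hr.mul 1 1
  rw [mul_one] at this
  exact (left_eq_mul.1 this)

theorem inv (hr : IsRev rev) (x : B n) : rev x⁻¹ = (rev x)⁻¹ := by
  rw [eq_inv_iff_mul_eq_one, ← hr.mul, mul_inv_cancel, hr.one]

theorem invol (hr : IsRev rev) (x : B n) : rev (rev x) = x := by
  refine braid_induction (p := fun x => rev (rev x) = x) ?_ ?_ ?_ ?_ x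
  · rw [hr.one, hr.one]
  · intro i; rw [hr.gen, hr.gen]
  · intro i; rw [hr.inv, hr.inv, hr.gen, hr.gen]
  · intro x y hx hy; rw [hr.mul, hr.mul, hx, hy]

theorem pow (hr : IsRev rev) (x : B n) (k : ℕ) : rev (x ^ k) = rev x ^ k := by
  induction k with
  | zero => simp [hr.one]
  | succ k ih => rw [pow_succ, hr.mul, ih, ← pow_succ']

theorem zpow (hr : IsRev rev) (x : B n) (k : ℤ) : rev (x ^ k) = rev x ^ k := by
  cases k with
  | ofNat k => simp [hr.pow]
  | negSucc k => simp only [zpow_negSucc, hr.inv, hr.pow]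

theorem wd (hr : IsRev rev) (u : List (Fin (n - 1))) : rev (wd u) = BraidMPF.wd u.reverse := by
  induction u with
  | nil => exact hr.one
  | cons i u ih => rw [wd_cons, hr.mul, ih, hr.gen, List.reverse_cons, wd_append, wd_single]

theorem mem (hr : IsRev rev) {x : B n} (h : x ∈ P n) : rev x ∈ P n := by
  obtain ⟨u, rfl⟩ := mem_P_iff.1 h
  rw [hr.wd]; exact wd_mem _

theorem mem_iff (hr : IsRev rev) {x : B n} : rev x ∈ P n ↔ x ∈ P n :=
  ⟨fun h => hr.invol x ▸ hr.mem h, hr.mem⟩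

theorem delta (hr : IsRev rev) : rev (Δ n) = Δ n := by
  have hg : ∀ j, rev (toB n (gn (n - 1) j)) = toB n (gn (n - 1) j) := by
    intro j
    unfold gn
    split_ifs
    · rw [toB_gen, hr.gen]
    · rw [map_one, hr.one]
  have hd : ∀ k, rev (toB n (dn (n - 1) k)) = toB n (up (n - 1) k) := by
    intro k
    induction k with
    | zero => simpa [dn, up] using hr.one
    | succ k ih => rw [dn_succ, up_succ, map_mul, hr.mul, ih, hg, map_mul]
  have hD : ∀ k, rev (toB n (gars (n - 1) k)) = toB n (gars (n - 1) k) := by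
    intro k
    induction k with
    | zero => simpa [gars] using hr.one
    | succ k ih =>
      rw [gars_succ, map_mul, hr.mul, ih, hd, ← map_mul, ← map_mul, gars_mul_dn]
  rw [← toB_gars, hD]

theorem om (hr : IsRev rev) : rev (Om n) = Om n := by rw [Om, hr.mul, hr.delta]

end IsRev

/-- `ε`-twisted conjugacy. -/
def TC {n : ℕ} (rev : B n → B n) (x y : B n) : Prop := ∃ c, y = rev c * x * c

section

variable {n : ℕ} {rev : B n → B n}

theorem TC.refl (hr : IsRev rev) (x : B n) : TC rev x x := ⟨1, by simp [hr.one]⟩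

theorem TC.symm (hr : IsRev rev) {x y : B n} (h : TC rev x y) : TC rev y x := by
  obtain ⟨c, rfl⟩ := h
  refine ⟨c⁻¹, ?_⟩
  rw [hr.inv]; group

theorem TC.trans (hr : IsRev rev) {x y z : B n} (h : TC rev x y) (h' : TC rev y z) :
    TC rev x z := by
  obtain ⟨c, rfl⟩ := h
  obtain ⟨d, rfl⟩ := h'
  exact ⟨c * d, by rw [hr.mul]; simp only [mul_assoc]⟩

end

/-- An elementary move between positive words: a braid relation, or adding or removing equal
letters at both ends. -/
def Move {m : ℕ} (u v : List (Fin m)) : Prop :=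
  Step u v ∨ (∃ i, v = i :: u ++ [i]) ∨ ∃ i, u = i :: v ++ [i]

theorem Move.symm {m : ℕ} {u v : List (Fin m)} (h : Move u v) : Move v u := by
  rcases h with h | h | h
  · exact .inl h.symm
  · exact .inr (.inr h)
  · exact .inr (.inl h)

/-- Connectedness by elementary moves through words of length at most `N`. -/
def Conn {m : ℕ} (N : ℕ) : List (Fin m) → List (Fin m) → Prop :=
  Relation.ReflTransGen (fun u v => Move u v ∧ u.length ≤ N ∧ v.length ≤ N)

theorem Conn.symm {m N : ℕ} {u v : List (Fin m)} (h : Conn N u v) : Conn N v u := by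
  induction h with
  | refl => exact .refl
  | tail _ h ih => exact .head ⟨h.1.symm, h.2.2, h.2.1⟩ ih

theorem Eqv.conn {m N : ℕ} {u v : List (Fin m)} (h : Eqv u v) (hu : u.length ≤ N) :
    Conn N u v := by
  induction h with
  | refl => exact .refl
  | @tail b c h1 h2 ih =>
    have := Eqv.length h1
    have := h2.length
    exact .tail ih ⟨.inl h2, by omega, by omega⟩

theorem conn_conj {m N : ℕ} (u p : List (Fin m)) (h : u.length + 2 * p.length ≤ N) :
    Conn N u (p.reverse ++ u ++ p) := by
  induction p using List.reverseRecOn with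
  | nil =>
    rw [List.reverse_nil, List.nil_append, List.append_nil]
    exact .refl
  | append_singleton p i ih =>
    simp only [List.length_append, List.length_singleton] at h
    refine .tail (ih (by omega)) ⟨.inr (.inl ⟨i, by simp⟩), ?_, ?_⟩ <;>
    · simp only [List.length_append, List.length_reverse, List.length_singleton]; omega

section

variable {n : ℕ} {rev : B n → B n}

theorem Conn.tc (hr : IsRev rev) {N : ℕ} {u v : List (Fin (n - 1))} (h : Conn N u v) :
    TC rev (wd u) (wd v) := by
  have key : ∀ (u : List (Fin (n - 1))) i, TC rev (wd u) (wd (i :: u ++ [i])) := by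
    intro u i
    exact ⟨σ i, by rw [wd_append, wd_cons, wd_single, hr.gen]⟩
  induction h with
  | refl => exact TC.refl hr _
  | tail _ h ih =>
    refine ih.trans hr ?_
    rcases h.1 with h | ⟨i, rfl⟩ | ⟨i, rfl⟩
    · rw [h.wd_eq]; exact TC.refl hr _
    · exact key _ i
    · exact (key _ i).symm hr

theorem wd_le_pow (u : List (Fin (n - 1))) : wd u ≤ Om n ^ u.length := by
  induction u with
  | nil => simp [wd_nil]
  | cons i u ih =>
    rw [le_def] at ih ⊢
    rw [wd_cons, mul_inv_rev, List.length_cons, pow_succ, ← mul_assoc, mul_assoc _ (σ i)⁻¹,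
      ← Om_pow_comm, ← mul_assoc, mul_assoc _ _ (Om n), ← Om_comm]
    exact mul_mem ih (Om_mul_sigma_inv i)

theorem exists_om_word (n : ℕ) : ∃ ω : List (Fin (n - 1)), wd ω = Om n := mem_P_iff.1 (Om_mem n)

/-- The antitone map `u ↦ x⁻¹ rev(u)⁻¹`, for which `f u ≤ v` means that `rev(u) x v` is positive. -/
def fmap (rev : B n → B n) (x : B n) (u : B n) : B n := x⁻¹ * (rev u)⁻¹

theorem fmap_le_iff {x u v : B n} : fmap rev x u ≤ v ↔ rev u * x * v ∈ P n := by
  rw [le_def, fmap, mul_inv_rev, inv_inv, inv_inv]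

theorem fmap_le_fmap (hr : IsRev rev) {x a b : B n} : fmap rev x a ≤ fmap rev x b ↔ b ≤ a := by
  rw [fmap_le_iff, fmap, le_def, ← hr.mem_iff (x := b⁻¹ * a), hr.mul, hr.inv, mul_assoc, mul_inv_cancel_left]

theorem fmap_surj (hr : IsRev rev) (x y : B n) : ∃ a, fmap rev x a = y :=
  ⟨rev (x * y)⁻¹, by rw [fmap, hr.invol]; group⟩

theorem fmap_anti (hr : IsRev rev) (x : B n) : Anti (Om n) (fmap rev x) where
  sup a b := by
    apply le_antisymm
    · exact le_inf ((fmap_le_fmap hr).2 le_sup_left) ((fmap_le_fmap hr).2 le_sup_right)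
    · obtain ⟨d, hd⟩ := fmap_surj hr x (fmap rev x a ⊓ fmap rev x b)
      rw [← hd, fmap_le_fmap hr]
      exact sup_le ((fmap_le_fmap hr (x := x)).1 (hd ▸ inf_le_left))
        ((fmap_le_fmap hr (x := x)).1 (hd ▸ inf_le_right))
  inf a b := by
    apply le_antisymm
    · obtain ⟨d, hd⟩ := fmap_surj hr x (fmap rev x a ⊔ fmap rev x b)
      rw [← hd, fmap_le_fmap hr]
      exact le_inf ((fmap_le_fmap hr (x := x)).1 (hd ▸ le_sup_left))
        ((fmap_le_fmap hr (x := x)).1 (hd ▸ le_sup_right))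
    · exact sup_le ((fmap_le_fmap hr).2 inf_le_left) ((fmap_le_fmap hr).2 inf_le_right)
  tw z a := by
    rw [fmap, fmap, hr.mul, hr.zpow, hr.om, mul_inv_rev, ← zpow_neg, ← mul_assoc, ← mul_assoc,
      Om_zpow_comm]

theorem Anti.pow_mul {f : B n → B n} (hf : Anti (Om n) f) (k : ℕ) :
    Anti (Om n) (fun a => Om n ^ k * f a) where
  sup a b := by rw [hf.sup, mul_inf]
  inf a b := by rw [hf.inf, mul_sup]
  tw z a := by rw [hf.tw, ← mul_assoc, ← mul_assoc, Om_zpow_comm]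

theorem le_pow_mul_fmap_iff {x u : B n} {k : ℕ} :
    u ≤ Om n ^ k * fmap rev x u ↔ rev u * x * u ≤ Om n ^ k := by
  rw [le_def, le_def, fmap, Om_pow_comm, mul_inv_rev, mul_inv_rev]
  simp only [mul_assoc]

/-- Twisted conjugate positive braids are connected by elementary moves through words of explicitly
bounded length. -/
theorem TC.conn (hr : IsRev rev) {ω : List (Fin (n - 1))} (hω : wd ω = Om n)
    {u v : List (Fin (n - 1))} (h : TC rev (wd u) (wd v)) {N : ℕ}
    (hN : (u.length + v.length + 6) * ω.length + (u.length + v.length) ≤ N) : Conn N u v := by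
  obtain ⟨c', hc'⟩ := h
  set x := wd (n := n) u with hx
  set m := u.length + v.length with hm
  have lnq : ln (Om n) = ω.length := by rw [← hω, ln_wd]
  have hq1 : 1 ≤ Om n := one_le_iff.2 (Om_mem n)
  have hle : ∀ (z : B n) {k l : ℕ}, k ≤ l → z ≤ Om n ^ k → z ≤ Om n ^ l := by
    intro z k l hkl hz
    refine hz.trans ?_
    obtain ⟨j, rfl⟩ := Nat.exists_eq_add_of_le hkl
    rw [pow_add]
    exact le_mul_of_one_le_right' (one_le_Om_pow n j)
  obtain ⟨a, ha⟩ := exists_pow_mul_mem c'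
  obtain ⟨b, hb⟩ := exists_pow_mul_mem c'⁻¹
  have hcc : 1 ≤ Om n ^ (a + b) * c' := by
    rw [one_le_iff, add_comm, pow_add, mul_assoc]
    exact mul_mem (pow_mem (Om_mem n) b) ha
  have hcc' : c' ≤ Om n ^ (a + b) * 1 := by
    rw [mul_one, le_def, ← Om_pow_comm, pow_add, mul_assoc]
    exact mul_mem (pow_mem (Om_mem n) a) hb
  obtain ⟨k, U, hU0, hUk, hU, hU'⟩ := exists_path hq1 Om_comm (fmap_anti hr x)
    ((fmap_anti hr x).pow_mul m) (a + b)
    (by rw [fmap_le_iff, hr.one]; simpa [hx] using wd_mem u)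
    (by
      rw [le_pow_mul_fmap_iff, hr.one, one_mul, mul_one]
      exact hle _ (by omega) (wd_le_pow u))
    (by rw [fmap_le_iff, ← hc']; exact wd_mem v)
    (by
      rw [le_pow_mul_fmap_iff, ← hc']
      exact hle _ (by omega) (wd_le_pow v)) hcc hcc'
  -- every braid on the path becomes positive, of bounded length, after multiplication by `Δ⁴`
  have hs : ∀ t ≤ k, ∃ s : List (Fin (n - 1)), wd s = Om n * (rev (U t) * x * U t) * Om n ∧
      s.length ≤ (m + 2) * ω.length := by
    intro t ht
    obtain ⟨h1, h2⟩ := hU t ht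
    rw [fmap_le_iff] at h1
    rw [le_pow_mul_fmap_iff] at h2
    have h3 : Om n * (rev (U t) * x * U t) ∈ P n := by
      rwa [← mul_assoc, Om_comm, mul_assoc]
    obtain ⟨s, hs⟩ := mem_P_iff.1 (mul_mem h3 (Om_mem n))
    refine ⟨s, hs, ?_⟩
    have h4 := ln_mono h2
    have h5 := congrArg ln hs
    rw [ln_pow, lnq] at h4
    rw [ln_wd, ln_mul, ln_mul, lnq] at h5
    have : (s.length : ℤ) ≤ (m + 2) * ω.length := by linarith
    exact_mod_cast this
  have hconj : ∀ w s : List (Fin (n - 1)), w.length ≤ (m + 2) * ω.length + m →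
      wd s = Om n * wd w * Om n → Conn N w s := by
    intro w s hw e
    refine (conn_conj w ω ?_).trans (Eqv.conn ?_ ?_)
    · linarith
    · rw [← wd_eq_iff (n := n), wd_append, wd_append, ← hr.wd, hω, hr.om, e]
    · simp only [List.length_append, List.length_reverse]; linarith
  have hpath : ∀ t ≤ k, ∀ s : List (Fin (n - 1)),
      wd s = Om n * (rev (U t) * x * U t) * Om n → Conn N u s := by
    intro t
    induction t with
    | zero =>
      intro _ s e
      refine hconj u s ?_ ?_
      · nlinarith
      · rw [e, hU0, hr.one, one_mul, mul_one]
    | succ t ih =>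
      intro ht s' e'
      obtain ⟨s, e, hsl⟩ := hs t (by omega)
      obtain ⟨s'', e'', hsl'⟩ := hs (t + 1) ht
      obtain ⟨g1, g2⟩ := hU' t (by omega)
      refine (ih (by omega) s e).trans ?_
      obtain ⟨p, hp⟩ := mem_P_iff.1 (le_def.1 g2)
      have lp : p.length ≤ 2 * ω.length := by
        have l1 := congrArg ln hp
        have l2 := ln_mono g1
        rw [ln_mul, lnq] at l2
        rw [ln_wd, ln_mul, ln_mul, ln_inv, lnq] at l1
        omega
      have hU1 : U (t + 1) = U t * ((Om n)⁻¹ * wd p) := by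
        rw [hp, ← mul_assoc (U t)⁻¹, ← Om_comm (U t)⁻¹]; group
      have ee : Eqv (p.reverse ++ s ++ p) (ω.reverse ++ s' ++ ω) := by
        rw [← wd_eq_iff (n := n)]
        simp only [wd_append, ← hr.wd, hω, hr.om]
        rw [e, e', hU1, hr.mul, hr.mul, hr.inv, hr.om]
        have c1 : ∀ y, (Om n)⁻¹ * y = y * (Om n)⁻¹ := fun y =>
          (show Commute (Om n) y from Om_comm y).inv_left
        simp only [c1 (wd p), mul_assoc]
        simp only [Om_comm, c1, mul_assoc, mul_inv_cancel, mul_one]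
      have hconn1 : Conn N s (p.reverse ++ s ++ p) := conn_conj s p (by linarith)
      have hconn2 : Conn N s' (ω.reverse ++ s' ++ ω) := by
        refine conn_conj s' ω ?_
        have := ee.length
        simp only [List.length_append, List.length_reverse] at this
        linarith
      refine (hconn1.trans (ee.conn ?_)).trans hconn2.symm
      simp only [List.length_append, List.length_reverse]; linarith
  obtain ⟨s, e, -⟩ := hs k le_rfl
  refine (hpath k le_rfl s e).trans (Conn.symm (hconj v s ?_ ?_))
  · nlinarith
  · rw [e, hUk, hc']

end

/-! ### Primitive recursive decision procedures -/

section primrec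

variable {α β γ : Type*} [Primcodable α] [Primcodable β] [Primcodable γ]

theorem prim_ex {L : γ → List α} {R : γ → α → Prop} (hL : Primrec L) (hR : PrimrecRel R) :
    PrimrecPred fun c => ∃ a ∈ L c, R c a :=
  (PrimrecRel.exists_mem_list (R := fun a c => R c a) hR.swap).comp hL Primrec.id

theorem prim_all {L : γ → List α} {R : γ → α → Prop} (hL : Primrec L) (hR : PrimrecRel R) :
    PrimrecPred fun c => ∀ a ∈ L c, R c a :=
  (PrimrecRel.forall_mem_list (R := fun a c => R c a) hR.swap).comp hL Primrec.id

theorem prim_imp {p q : γ → Prop} (hp : PrimrecPred p) (hq : PrimrecPred q) :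
    PrimrecPred fun c => p c → q c :=
  (hp.not.or hq).of_eq fun _ => imp_iff_not_or.symm

theorem prim_mem {f : γ → α} {L : γ → List α} (hf : Primrec f) (hL : Primrec L) :
    PrimrecPred fun c => f c ∈ L c :=
  (prim_ex (R := fun c a => a = f c) hL
    (Primrec.eq.comp Primrec.snd (hf.comp Primrec.fst))).of_eq fun c => by simp

theorem prim_sublists : Primrec (List.sublists' : List α → List (List α)) :=
  (Primrec.list_foldr (h := fun (_ : List α) (p : α × List (List α)) =>
      p.2 ++ p.2.map (p.1 :: ·)) Primrec.id (Primrec.const [[]])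
    (Primrec.list_append.comp (Primrec.snd.comp Primrec.snd)
      (Primrec.list_map (Primrec.snd.comp Primrec.snd)
        (Primrec.list_cons.comp (Primrec.fst.comp (Primrec.snd.comp Primrec.fst))
          Primrec.snd).to₂)).to₂).of_eq fun l => by
    induction l with
    | nil => rfl
    | cons a l ih =>
      rw [List.sublists'_cons, ← ih]
      rfl

end primrec

/-- All words of length at most `N`. -/
def allW (m N : ℕ) : List (List (Fin m)) :=
  (fun L : List (List (Fin m)) => [] :: L.flatMap fun u => (List.finRange m).map (· :: u))^[N] [[]]

theorem mem_allW {m N : ℕ} {u : List (Fin m)} : u ∈ allW m N ↔ u.length ≤ N := by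
  induction N generalizing u with
  | zero => simp [allW]
  | succ N ih =>
    rw [allW, Function.iterate_succ_apply']
    change u ∈ [] :: (allW m N).flatMap _ ↔ _
    cases u with
    | nil => simp
    | cons i u => simp [ih]

theorem prim_allW (m : ℕ) : Primrec (allW m) := by
  refine Primrec.nat_iterate
    (h := fun (_ : ℕ) (L : List (List (Fin m))) =>
      [] :: L.flatMap fun u => (List.finRange m).map (· :: u))
    Primrec.id (Primrec.const [[]]) ?_
  refine Primrec.list_cons.comp (Primrec.const []) (Primrec.list_flatMap Primrec.snd ?_)
  exact (Primrec.list_map (Primrec.const _)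
    (Primrec.list_cons.comp Primrec.snd (Primrec.snd.comp Primrec.fst)).to₂).to₂

/-- Reachability under `E` through words of length at most `N`. -/
def Reach {m : ℕ} (E : List (Fin m) → List (Fin m) → Prop) (N : ℕ) :
    List (Fin m) → List (Fin m) → Prop :=
  Relation.ReflTransGen (fun u v => E u v ∧ u.length ≤ N ∧ v.length ≤ N)

/-- Reachability in a finite graph, expressed by quantification over all closed vertex sets. -/
theorem reach_iff {m : ℕ} {E : List (Fin m) → List (Fin m) → Prop} {N : ℕ} {u v : List (Fin m)} :
    Reach E N u v ↔ u = v ∨ (u.length ≤ N ∧ ∀ C ∈ (allW m N).sublists', u ∈ C →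
      (∀ a ∈ C, ∀ b ∈ allW m N, E a b → b ∈ C) → v ∈ C) := by
  classical
  constructor
  · intro h
    rcases Relation.ReflTransGen.cases_head h with h' | ⟨w, hw, -⟩
    · exact .inl h'
    refine .inr ⟨hw.2.1, fun C hC huC hcl => ?_⟩
    clear hw
    induction h with
    | refl => exact huC
    | tail _ h ih => exact hcl _ ih _ (mem_allW.2 h.2.2) h.1
  · rintro (rfl | ⟨hu, h⟩)
    · exact .refl
    have := h ((allW m N).filter (fun w => Reach E N u w))
      (List.mem_sublists'.2 List.filter_sublist)
      (List.mem_filter.2 ⟨mem_allW.2 hu, decide_eq_true (Relation.ReflTransGen.refl : Reach E N u u)⟩) ?_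
    · simpa using (List.mem_filter.1 this).2
    · intro a ha b hb hab
      simp only [List.mem_filter, decide_eq_true_eq] at ha ⊢
      exact ⟨hb, ha.2.tail ⟨hab, mem_allW.1 ha.1, mem_allW.1 hb⟩⟩

theorem prim_reach {m : ℕ} {E : List (Fin m) → List (Fin m) → Prop} (hE : PrimrecRel E)
    {γ : Type*} [Primcodable γ] {N : γ → ℕ} {u v : γ → List (Fin m)} (hN : Primrec N)
    (hu : Primrec u) (hv : Primrec v) : PrimrecPred fun c => Reach E (N c) (u c) (v c) := by
  refine PrimrecPred.of_eq ?_ fun c => reach_iff.symm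
  refine (Primrec.eq.comp hu hv).or ((Primrec.nat_le.comp (Primrec.list_length.comp hu) hN).and ?_)
  refine prim_all (prim_sublists.comp ((prim_allW m).comp hN)) ?_
  refine prim_imp (prim_mem (hu.comp Primrec.fst) Primrec.snd)
    (prim_imp ?_ (prim_mem (hv.comp Primrec.fst) Primrec.snd))
  refine prim_all (γ := γ × List (List (Fin m))) Primrec.snd ?_
  refine prim_all (γ := (γ × List (List (Fin m))) × List (Fin m))
    ((prim_allW m).comp (hN.comp (Primrec.fst.comp Primrec.fst))) ?_
  exact prim_imp (hE.comp (Primrec.snd.comp Primrec.fst) Primrec.snd)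
    (prim_mem Primrec.snd (Primrec.snd.comp (Primrec.fst.comp Primrec.fst)))

theorem exists_ruleList (m : ℕ) : ∃ R : List (List (Fin m) × List (Fin m)),
    ∀ p, p ∈ R ↔ Rule p.1 p.2 := by
  have hfin : {p : List (Fin m) × List (Fin m) | Rule p.1 p.2}.Finite := by
    refine (Set.finite_range (fun q : Bool × Fin m × Fin m =>
      if q.1 then ([q.2.1, q.2.2], [q.2.2, q.2.1])
      else ([q.2.1, q.2.2, q.2.1], [q.2.2, q.2.1, q.2.2]))).subset ?_
    rintro ⟨l, r⟩ h
    change Rule l r at h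
    cases h with
    | comm i j h => exact ⟨(true, i, j), rfl⟩
    | braid i j h => exact ⟨(false, i, j), rfl⟩
  exact ⟨hfin.toFinset.toList, fun p => by simp⟩

theorem prim_step (m : ℕ) : PrimrecRel (Step (m := m)) := by
  obtain ⟨R, hR⟩ := exists_ruleList m
  have h : PrimrecPred fun c : List (Fin m) × List (Fin m) =>
      ∃ a ∈ allW m c.1.length, ∃ b ∈ allW m c.1.length, ∃ p ∈ R,
        c.1 = a ++ p.1 ++ b ∧ c.2 = a ++ p.2 ++ b := by
    refine prim_ex ((prim_allW m).comp (Primrec.list_length.comp Primrec.fst)) ?_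
    refine prim_ex (γ := (List (Fin m) × List (Fin m)) × List (Fin m))
      ((prim_allW m).comp (Primrec.list_length.comp (Primrec.fst.comp Primrec.fst))) ?_
    refine prim_ex (γ := ((List (Fin m) × List (Fin m)) × List (Fin m)) × List (Fin m))
      (Primrec.const R) ?_
    have ha : Primrec fun c : (((List (Fin m) × List (Fin m)) × List (Fin m)) × List (Fin m)) ×
        (List (Fin m) × List (Fin m)) => c.1.1.2 :=
      Primrec.snd.comp (Primrec.fst.comp Primrec.fst)
    have hb : Primrec fun c : (((List (Fin m) × List (Fin m)) × List (Fin m)) × List (Fin m)) ×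
        (List (Fin m) × List (Fin m)) => c.1.2 :=
      Primrec.snd.comp Primrec.fst
    have hc : Primrec fun c : (((List (Fin m) × List (Fin m)) × List (Fin m)) × List (Fin m)) ×
        (List (Fin m) × List (Fin m)) => c.1.1.1 :=
      Primrec.fst.comp (Primrec.fst.comp Primrec.fst)
    exact (Primrec.eq.comp (Primrec.fst.comp hc) (Primrec.list_append.comp
      (Primrec.list_append.comp ha (Primrec.fst.comp Primrec.snd)) hb)).and
      (Primrec.eq.comp (Primrec.snd.comp hc) (Primrec.list_append.comp
      (Primrec.list_append.comp ha (Primrec.snd.comp Primrec.snd)) hb))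
  refine h.of_eq fun c => ?_
  constructor
  · rintro ⟨a, -, b, -, p, hp, h1, h2⟩
    exact ⟨a, b, p.1, p.2, (hR p).1 hp, h1, h2⟩
  · rintro ⟨a, b, l, r, hlr, h1, h2⟩
    have := congrArg List.length h1
    simp only [List.length_append] at this
    exact ⟨a, mem_allW.2 (by omega), b, mem_allW.2 (by omega), (l, r), (hR _).2 hlr, h1, h2⟩

theorem eqv_iff_reach {m : ℕ} {u v : List (Fin m)} : Eqv u v ↔ Reach Step u.length u v := by
  constructor
  · intro h
    induction h with
    | refl => exact .refl
    | @tail b c h1 h2 ih =>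
      have := Eqv.length h1
      have := h2.length
      exact ih.tail ⟨h2, by omega, by omega⟩
  · intro h
    induction h with
    | refl => exact .refl
    | tail _ h ih => exact ih.tail h.1

theorem prim_eqv {m : ℕ} {γ : Type*} [Primcodable γ] {u v : γ → List (Fin m)}
    (hu : Primrec u) (hv : Primrec v) : PrimrecPred fun c => Eqv (u c) (v c) :=
  (prim_reach (prim_step m) (Primrec.list_length.comp hu) hu hv).of_eq fun _ => eqv_iff_reach.symm

theorem prim_sandwich {m : ℕ} {γ : Type*} [Primcodable γ] {i : γ → Fin m} {u : γ → List (Fin m)}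
    (hi : Primrec i) (hu : Primrec u) : Primrec fun c => i c :: u c ++ [i c] :=
  Primrec.list_append.comp (Primrec.list_cons.comp hi hu)
    (Primrec.list_cons.comp hi (Primrec.const []))

theorem prim_move (m : ℕ) : PrimrecRel (Move (m := m)) := by
  have h1 : PrimrecPred fun c : List (Fin m) × List (Fin m) =>
      ∃ i ∈ List.finRange m, c.2 = i :: c.1 ++ [i] :=
    prim_ex (Primrec.const _) (Primrec.eq.comp (Primrec.snd.comp Primrec.fst)
      (prim_sandwich Primrec.snd (Primrec.fst.comp Primrec.fst)))
  have h2 : PrimrecPred fun c : List (Fin m) × List (Fin m) =>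
      ∃ i ∈ List.finRange m, c.1 = i :: c.2 ++ [i] :=
    prim_ex (Primrec.const _) (Primrec.eq.comp (Primrec.fst.comp Primrec.fst)
      (prim_sandwich Primrec.snd (Primrec.snd.comp Primrec.fst)))
  refine ((prim_step m).or (h1.or h2)).of_eq fun c => ?_
  simp [Move]

theorem prim_conn {m : ℕ} {γ : Type*} [Primcodable γ] {N : γ → ℕ} {u v : γ → List (Fin m)}
    (hN : Primrec N) (hu : Primrec u) (hv : Primrec v) :
    PrimrecPred fun c => Conn (N c) (u c) (v c) :=
  prim_reach (prim_move m) hN hu hv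

section

variable {n : ℕ}

theorem palFree_wd_iff {u : List (Fin (n - 1))} : PalFree (wd (n := n) u) ↔
    ∀ i ∈ List.finRange (n - 1), ∀ v ∈ allW (n - 1) u.length, ¬ Eqv u (i :: v ++ [i]) := by
  have key : ∀ i v, (wd v = (σ i)⁻¹ * wd u * (σ (n := n) i)⁻¹ ↔ Eqv u (i :: v ++ [i])) := by
    intro i v
    rw [← wd_eq_iff (n := n), wd_append, wd_cons, wd_single]
    constructor
    · intro h; rw [h]; group
    · intro h; rw [h]; group
  constructor
  · intro h i _ v _ hv
    exact h i (mem_P_iff.2 ⟨v, (key i v).2 hv⟩)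
  · intro h i hi
    obtain ⟨v, hv⟩ := mem_P_iff.1 hi
    rw [key] at hv
    have := hv.length
    simp only [List.length_append, List.length_cons] at this
    exact h i (List.mem_finRange i) v (mem_allW.2 (by omega)) hv

theorem prim_palFree : PrimrecPred fun u : List (Fin (n - 1)) => PalFree (wd (n := n) u) := by
  refine PrimrecPred.of_eq ?_ fun u => palFree_wd_iff.symm
  refine prim_all (Primrec.const _) ?_
  refine prim_all (γ := List (Fin (n - 1)) × Fin (n - 1))
    ((prim_allW _).comp (Primrec.list_length.comp Primrec.fst)) ?_
  exact (prim_eqv (Primrec.fst.comp Primrec.fst)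
    (prim_sandwich (Primrec.snd.comp Primrec.fst) Primrec.snd)).not

/-- The `p`-fold concatenation power of a word. -/
def wpow {m : ℕ} (δ : List (Fin m)) (p : ℕ) : List (Fin m) := (δ ++ ·)^[p] []

theorem wd_wpow (δ : List (Fin (n - 1))) (p : ℕ) : wd (n := n) (wpow δ p) = wd δ ^ p := by
  induction p with
  | zero => rw [pow_zero]; rfl
  | succ p ih =>
    rw [wpow, Function.iterate_succ_apply', wd_append, pow_succ']
    exact congrArg _ ih

theorem length_wpow {m : ℕ} (δ : List (Fin m)) (p : ℕ) : (wpow δ p).length = p * δ.length := by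
  induction p with
  | zero => simp [wpow]
  | succ p ih =>
    rw [wpow, Function.iterate_succ_apply', List.length_append, add_mul, one_mul, add_comm]
    exact congrArg (· + _) ih

theorem prim_wpow {m : ℕ} (δ : List (Fin m)) : Primrec (wpow δ) :=
  Primrec.nat_iterate (h := fun _ l => δ ++ l) Primrec.id (Primrec.const [])
    (Primrec.list_append.comp (Primrec.const δ) Primrec.snd).to₂

theorem ln_delta_pos (hn : 2 ≤ n) : 1 ≤ ln (Δ n) := by
  have i : Fin (n - 1) := ⟨0, by omega⟩
  have h := ln_nonneg (Om_mul_sigma_inv i)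
  rw [ln_mul, ln_inv, ln_sigma, Om, ln_mul] at h
  omega

theorem ln_zpow (x : B n) (k : ℤ) : ln (x ^ k) = k * ln x := by simp [ln]

theorem delta_zpow_mem {k : ℤ} (hk : 0 ≤ k) : Δ n ^ k ∈ P n := by
  obtain ⟨l, rfl⟩ := Int.eq_ofNat_of_zero_le hk
  rw [zpow_natCast]; exact pow_mem (delta_mem n) l

/-- For a positive braid, only exponents `0 ≤ p ≤ |u|` matter in the definition of canonical
length. -/
theorem lenLE_wd_iff (hn : 2 ≤ n) {δ : List (Fin (n - 1))} (hδ : wd δ = Δ n)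
    {u : List (Fin (n - 1))} {m : ℕ} : lenLE (wd (n := n) u) m ↔
      ∃ p ∈ List.range (u.length + 1), (∃ v ∈ allW (n - 1) u.length, Eqv u (wpow δ p ++ v)) ∧
        ∃ v ∈ allW (n - 1) ((p + m) * δ.length), Eqv (u ++ v) (wpow δ (p + m)) := by
  have key : lenLE (wd (n := n) u) m ↔ ∃ p ∈ List.range (u.length + 1),
      (Δ n ^ p)⁻¹ * wd u ∈ P n ∧ (wd u)⁻¹ * Δ n ^ (p + m) ∈ P n := by
    constructor
    · rintro ⟨p, h1, h2⟩
      rcases lt_or_ge p 0 with hp | hp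
      · refine ⟨0, by simp, by simpa using wd_mem u, ?_⟩
        have := mul_mem h2 (delta_zpow_mem (n := n) (by omega : 0 ≤ -p))
        rw [mul_assoc, ← zpow_add, show p + m + -p = ((0 + m : ℕ) : ℤ) by push_cast; ring,
          zpow_natCast] at this
        exact this
      · obtain ⟨p, rfl⟩ := Int.eq_ofNat_of_zero_le hp
        refine ⟨p, ?_, ?_, ?_⟩
        · have h3 := ln_nonneg h1
          have h4 := ln_delta_pos hn
          rw [ln_mul, ln_zpow, ln_wd] at h3
          rw [List.mem_range]
          have : (p : ℤ) * 1 ≤ p * ln (Δ n) := mul_le_mul_of_nonneg_left h4 (by positivity)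
          have : (p : ℤ) < u.length + 1 := by linarith
          exact_mod_cast this
        · rwa [zpow_neg, zpow_natCast] at h1
        · rw [← zpow_natCast]; push_cast; exact h2
    · rintro ⟨p, -, h1, h2⟩
      refine ⟨p, by rwa [zpow_neg, zpow_natCast], ?_⟩
      rw [← zpow_natCast] at h2
      push_cast at h2; exact h2
  rw [key]
  refine exists_congr fun p => and_congr_right fun _ => and_congr ?_ ?_
  · rw [mem_P_iff]
    constructor
    · rintro ⟨v, hv⟩
      have e : Eqv u (wpow δ p ++ v) := by
        rw [← wd_eq_iff (n := n), wd_append, wd_wpow, hδ, hv, mul_inv_cancel_left]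
      have := e.length
      rw [List.length_append] at this
      exact ⟨v, mem_allW.2 (by omega), e⟩
    · rintro ⟨v, -, e⟩
      rw [← wd_eq_iff (n := n), wd_append, wd_wpow, hδ] at e
      exact ⟨v, by rw [e, inv_mul_cancel_left]⟩
  · rw [mem_P_iff]
    constructor
    · rintro ⟨v, hv⟩
      have e : Eqv (u ++ v) (wpow δ (p + m)) := by
        rw [← wd_eq_iff (n := n), wd_append, wd_wpow, hδ, hv, mul_inv_cancel_left]
      have := e.length
      rw [List.length_append, length_wpow] at this
      exact ⟨v, mem_allW.2 (by omega), e⟩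
    · rintro ⟨v, -, e⟩
      rw [← wd_eq_iff (n := n), wd_append, wd_wpow, hδ] at e
      exact ⟨v, by rw [← e, inv_mul_cancel_left]⟩

theorem prim_lenLE (hn : 2 ≤ n) :
    PrimrecRel fun (u : List (Fin (n - 1))) (m : ℕ) => lenLE (wd (n := n) u) m := by
  obtain ⟨δ, hδ⟩ := mem_P_iff.1 (delta_mem n)
  refine PrimrecRel.of_eq ?_ fun u m => (lenLE_wd_iff hn hδ).symm
  refine prim_ex (γ := List (Fin (n - 1)) × ℕ)
    (Primrec.list_range.comp (Primrec.succ.comp (Primrec.list_length.comp Primrec.fst))) ?_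
  have hpm : Primrec fun c : (List (Fin (n - 1)) × ℕ) × ℕ => c.2 + c.1.2 :=
    Primrec.nat_add.comp Primrec.snd (Primrec.snd.comp Primrec.fst)
  refine PrimrecPred.and ?_ ?_
  · refine prim_ex (γ := (List (Fin (n - 1)) × ℕ) × ℕ)
      ((prim_allW _).comp (Primrec.list_length.comp (Primrec.fst.comp Primrec.fst))) ?_
    exact prim_eqv (Primrec.fst.comp (Primrec.fst.comp Primrec.fst))
      (Primrec.list_append.comp ((prim_wpow δ).comp (Primrec.snd.comp Primrec.fst)) Primrec.snd)
  · refine prim_ex (γ := (List (Fin (n - 1)) × ℕ) × ℕ)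
      ((prim_allW _).comp (Primrec.nat_mul.comp hpm (Primrec.const _))) ?_
    exact prim_eqv (Primrec.list_append.comp (Primrec.fst.comp (Primrec.fst.comp Primrec.fst))
      Primrec.snd) ((prim_wpow δ).comp (hpm.comp Primrec.fst))

end

/-! ### Length bounds and the algorithm -/

section

variable {n : ℕ} {rev : B n → B n}

theorem lenLE_mono {x : B n} {m m' : ℕ} (h : lenLE x m) (hm : m ≤ m') : lenLE x m' := by
  obtain ⟨p, h1, h2⟩ := h
  refine ⟨p, h1, ?_⟩
  have := mul_mem h2 (delta_zpow_mem (n := n) (k := (m' : ℤ) - m) (by omega))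
  rwa [mul_assoc, ← zpow_add, show p + (m : ℤ) + (m' - m) = p + m' by ring] at this

theorem lenLE_wd (u : List (Fin (n - 1))) : lenLE (wd (n := n) u) (2 * u.length) := by
  refine ⟨0, by simpa using wd_mem u, ?_⟩
  have h := le_def.1 (wd_le_pow (n := n) u)
  rw [zero_add, zpow_natCast, pow_mul, pow_two]
  exact h

/-- Stripping off equal letters from both ends of a positive braid terminates in a
palindromic-free twisted conjugate. -/
theorem exists_palFree (hr : IsRev rev) (u : List (Fin (n - 1))) :
    ∃ v : List (Fin (n - 1)), v.length ≤ u.length ∧ PalFree (wd (n := n) v) ∧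
      TC rev (wd u) (wd v) := by
  induction h : u.length using Nat.strong_induction_on generalizing u with
  | _ k ih =>
    subst h
    by_cases hu : PalFree (wd (n := n) u)
    · exact ⟨u, le_rfl, hu, TC.refl hr _⟩
    · simp only [PalFree, not_forall, not_not] at hu
      obtain ⟨i, hi⟩ := hu
      obtain ⟨v, hv⟩ := mem_P_iff.1 hi
      have hl := congrArg ln hv
      rw [ln_mul, ln_mul, ln_inv, ln_sigma, ln_wd, ln_wd] at hl
      obtain ⟨v', h1, h2, h3⟩ := ih v.length (by omega) v rfl
      refine ⟨v', by omega, h2, TC.trans hr ⟨(σ i)⁻¹, ?_⟩ h3⟩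
      rw [hv, hr.inv, hr.gen]

/-- A palindromic-free braid is not divisible by `Δ ^ 4`, which bounds its length in terms of
its canonical length. -/
theorem ln_le_of_lenLE (hn : 2 ≤ n) {y : B n} {m : ℕ} (hy : PalFree y) (h : lenLE y m) :
    ln y ≤ (m + 3) * ln (Δ n) := by
  obtain ⟨p, h1, h2⟩ := h
  have hp : p ≤ 3 := by
    by_contra hp
    let i : Fin (n - 1) := ⟨0, by omega⟩
    refine hy i ?_
    have h3 := mul_mem (mul_mem (Om_mul_sigma_inv i)
      (mul_mem (delta_zpow_mem (n := n) (k := p - 4) (by omega)) h1)) (Om_mul_sigma_inv i)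
    have e : Δ n ^ (p - 4) * (Δ n ^ (-p) * y) = (Om n * Om n)⁻¹ * y := by
      rw [Om]; group
    rw [e, Om_comm (σ i)⁻¹] at h3
    convert h3 using 1
    calc (σ i)⁻¹ * y * (σ i)⁻¹ = (σ i)⁻¹ * (Om n)⁻¹ * (Om n * y) * (σ i)⁻¹ := by group
      _ = (σ i)⁻¹ * (Om n)⁻¹ * (y * Om n) * (σ i)⁻¹ := by rw [Om_comm]
      _ = (σ i)⁻¹ * Om n * ((Om n * Om n)⁻¹ * y) * (Om n * (σ i)⁻¹) := by group
      _ = _ := by rw [Om_comm (σ i)⁻¹]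
  have h3 := ln_nonneg h2
  rw [ln_mul, ln_inv, ln_zpow] at h3
  have : (p + m) * ln (Δ n) ≤ (m + 3) * ln (Δ n) :=
    mul_le_mul_of_nonneg_right (by omega) (by linarith [ln_delta_pos hn])
  linarith

/-- Each signed letter, multiplied by the central positive braid `Δ ^ 4`, is a positive braid. -/
theorem exists_table (n : ℕ) : ∃ t : Fin (n - 1) × Bool → List (Fin (n - 1)),
    ∀ a, wd (t a) = Om n * Om n * (if a.2 then σ a.1 else (σ a.1)⁻¹) := by
  have : ∀ a : Fin (n - 1) × Bool, ∃ u : List (Fin (n - 1)),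
      wd u = Om n * Om n * (if a.2 then σ a.1 else (σ a.1)⁻¹) := by
    rintro ⟨i, b⟩
    refine mem_P_iff.1 ?_
    rw [mul_assoc]
    refine mul_mem (Om_mem n) ?_
    cases b
    · exact Om_mul_sigma_inv i
    · exact mul_mem (Om_mem n) (sigma_mem i)
  exact ⟨fun a => (this a).choose, fun a => (this a).choose_spec⟩

theorem wd_flatMap {t : Fin (n - 1) × Bool → List (Fin (n - 1))}
    (ht : ∀ a, wd (t a) = Om n * Om n * (if a.2 then σ a.1 else (σ a.1)⁻¹))
    (w : List (Fin (n - 1) × Bool)) :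
    wd (w.flatMap t) = Om n ^ w.length * π w * Om n ^ w.length := by
  induction w with
  | nil => simp [wd_nil, π]
  | cons a w ih =>
    have e : (π (a :: w) : B n) = (if a.2 then σ a.1 else (σ a.1)⁻¹) * π w := by simp [π]
    rw [List.flatMap_cons, wd_append, ht, ih, e, List.length_cons]
    generalize (if a.2 then σ a.1 else (σ a.1)⁻¹ : B n) = s
    generalize (π w : B n) = t
    calc Om n * Om n * s * (Om n ^ w.length * t * Om n ^ w.length)
        = Om n * (Om n * (s * Om n ^ w.length * t)) * Om n ^ w.length := by simp only [mul_assoc]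
      _ = Om n * (Om n ^ w.length * s * t) * Om n * Om n ^ w.length := by
        rw [← Om_pow_comm w.length s, Om_comm (Om n * _)]
      _ = Om n ^ (w.length + 1) * (s * t) * Om n ^ (w.length + 1) := by
        rw [pow_succ']; simp only [mul_assoc]

theorem pi_map_true (u : List (Fin (n - 1))) : π (n := n) (u.map (·, true)) = wd u := by
  simp [π, wd, Function.comp_def]

end

end BraidMPF

open BraidMPF in
/-- `MPF x` is computable. -/
theorem MPF_computable (n : ℕ) (hn : 2 ≤ n)
    (rev : B n → B n)
    (hrev_mul : ∀ x y : B n, rev (x * y) = rev y * rev x)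
    (hrev_gen : ∀ i : Fin (n - 1), rev (σ i) = σ i) :
    ∃ F : List (Fin (n - 1) × Bool) → List (List (Fin (n - 1) × Bool)),
      Computable F ∧
      ∀ w : List (Fin (n - 1) × Bool),
        { y : B n | ∃ u ∈ F w, π u = y } = MPF rev (π w) := by
  classical
  have hr : IsRev rev := ⟨hrev_mul, hrev_gen⟩
  obtain ⟨t, ht⟩ := exists_table n
  obtain ⟨δ, hδ⟩ := mem_P_iff.1 (delta_mem n)
  obtain ⟨ω, hω⟩ := exists_om_word n
  -- a positive twisted conjugate of `π w`, a bound on the minimal canonical length, a bound on the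
  -- length of the relevant palindromic-free words, and a bound on the words on connecting paths
  let p : List (Fin (n - 1) × Bool) → List (Fin (n - 1)) := fun w => w.flatMap t
  let L : List (Fin (n - 1) × Bool) → ℕ := fun w => 2 * (p w).length
  let D : List (Fin (n - 1) × Bool) → ℕ := fun w => (L w + 3) * δ.length
  let N : List (Fin (n - 1) × Bool) → ℕ := fun w =>
    ((p w).length + D w + 6) * ω.length + ((p w).length + D w)
  let C : List (Fin (n - 1)) → List (Fin (n - 1) × Bool) → Prop := fun u w =>
    PalFree (wd (n := n) u) ∧ Conn (N w) (p w) u ∧ ∀ m ∈ List.range (L w + 1),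
      (∃ z ∈ allW (n - 1) (D w), PalFree (wd (n := n) z) ∧ Conn (N w) (p w) z ∧
        lenLE (wd (n := n) z) m) → lenLE (wd (n := n) u) m
  have hp : Primrec p := Primrec.list_flatMap Primrec.id ((Primrec.dom_finite t).comp Primrec.snd).to₂
  have hpl : Primrec fun w => (p w).length := Primrec.list_length.comp hp
  have hL : Primrec L := Primrec.nat_mul.comp (Primrec.const 2) hpl
  have hD : Primrec D :=
    Primrec.nat_mul.comp (Primrec.nat_add.comp hL (Primrec.const 3)) (Primrec.const _)
  have hpD : Primrec fun w => (p w).length + D w := Primrec.nat_add.comp hpl hD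
  have hN : Primrec N := Primrec.nat_add.comp
    (Primrec.nat_mul.comp (Primrec.nat_add.comp hpD (Primrec.const 6)) (Primrec.const _)) hpD
  have hC : PrimrecRel C := by
    refine (prim_palFree.comp Primrec.fst).and ((prim_conn (hN.comp Primrec.snd)
      (hp.comp Primrec.snd) Primrec.fst).and ?_)
    refine prim_all (Primrec.list_range.comp (Primrec.succ.comp (hL.comp Primrec.snd))) ?_
    refine prim_imp ?_ ((prim_lenLE hn).comp (Primrec.fst.comp Primrec.fst) Primrec.snd)
    refine prim_ex (γ := (List (Fin (n - 1)) × List (Fin (n - 1) × Bool)) × ℕ)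
      ((prim_allW _).comp (hD.comp (Primrec.snd.comp Primrec.fst))) ?_
    have hw : Primrec fun c : ((List (Fin (n - 1)) × List (Fin (n - 1) × Bool)) × ℕ) ×
        List (Fin (n - 1)) => c.1.1.2 := Primrec.snd.comp (Primrec.fst.comp Primrec.fst)
    exact (prim_palFree.comp Primrec.snd).and ((prim_conn (hN.comp hw) (hp.comp hw)
      Primrec.snd).and ((prim_lenLE hn).comp Primrec.snd (Primrec.snd.comp Primrec.fst)))
  refine ⟨fun w => ((allW (n - 1) (D w)).filter fun u => C u w).map fun u => u.map (·, true),
    ?_, fun w => ?_⟩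
  · refine Primrec.to_comp (Primrec.list_map
      (hC.listFilter.comp ((prim_allW _).comp hD) Primrec.id) ?_)
    exact (Primrec.list_map Primrec.snd
      (Primrec.pair Primrec.snd (Primrec.const true)).to₂).to₂
  have hx : TC rev (π w) (wd (p w)) :=
    ⟨Om n ^ w.length, by rw [hr.pow, hr.om]; exact wd_flatMap ht w⟩
  have htc : ∀ y, (∃ c, y = rev c * π w * c) ↔ TC rev (wd (p w)) y := fun y =>
    ⟨fun h => TC.trans hr (TC.symm hr hx) h, fun h => TC.trans hr hx h⟩
  have hδ1 : 1 ≤ δ.length := by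
    have := ln_delta_pos hn
    rw [← hδ, ln_wd] at this
    exact_mod_cast this
  have hbound : ∀ {u : List (Fin (n - 1))} {m : ℕ}, m ≤ L w → PalFree (wd (n := n) u) →
      lenLE (wd (n := n) u) m → u.length ≤ D w := by
    intro u m hm h1 h2
    have := ln_le_of_lenLE hn h1 h2
    rw [← hδ, ln_wd, ln_wd] at this
    have h3 : u.length ≤ (m + 3) * δ.length := by exact_mod_cast this
    exact h3.trans (Nat.mul_le_mul_right _ (by omega))
  have hconn : ∀ {u : List (Fin (n - 1))}, u.length ≤ D w →
      (Conn (N w) (p w) u ↔ TC rev (wd (p w)) (wd u)) := fun {u} hu =>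
    ⟨fun h => h.tc hr, fun h => h.conn hr hω (by
      dsimp only [N]
      gcongr)⟩
  -- some palindromic-free conjugate has canonical length at most `L w`, so canonical lengths beyond
  -- `L w` need no search
  obtain ⟨v, hv1, hv2, hv3⟩ := exists_palFree hr (p w)
  have hvL : lenLE (wd (n := n) v) (L w) := lenLE_mono (lenLE_wd v) (by dsimp only [L]; omega)
  have hvD : v.length ≤ D w := hbound le_rfl hv2 hvL
  ext y
  simp only [Set.mem_ofPred_eq, MPF, htc, List.mem_map, List.mem_filter, decide_eq_true_eq, mem_allW]
  constructor
  · rintro ⟨_, ⟨u, ⟨hu, hC1, hC2, hC3⟩, rfl⟩, rfl⟩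
    rw [pi_map_true]
    refine ⟨wd_mem u, hC1, hC2.tc hr, ?_⟩
    have huL : lenLE (wd (n := n) u) (L w) :=
      hC3 _ (by simp) ⟨v, mem_allW.2 hvD, hv2, (hconn hvD).2 hv3, hvL⟩
    rintro m ⟨z, hz1, hz2, hz3, hz4⟩
    rcases le_total (L w) m with hm | hm
    · exact lenLE_mono huL hm
    obtain ⟨z, rfl⟩ := mem_P_iff.1 hz1
    have hzD := hbound hm hz2 hz4
    exact hC3 m (List.mem_range.2 (by omega)) ⟨z, mem_allW.2 hzD, hz2, (hconn hzD).2 hz3, hz4⟩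
  · rintro ⟨hy1, hy2, hy3, hy4⟩
    obtain ⟨u, rfl⟩ := mem_P_iff.1 hy1
    have huD := hbound le_rfl hy2 (hy4 _ ⟨_, wd_mem v, hv2, hv3, hvL⟩)
    refine ⟨_, ⟨u, ⟨huD, hy2, (hconn huD).2 hy3, ?_⟩, rfl⟩, pi_map_true u⟩
    rintro m - ⟨z, hz1, hz2, hz3, hz4⟩
    exact hy4 m ⟨_, wd_mem z, hz2, hz3.tc hr, hz4⟩
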